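/- arXiv:2110.01156 — 3 statements merged into one kernel-verified Lean document; each statement's English description precedes it below -/
import Mathlib

section
/- There exist a constant C > 0 and an integer N such that for all n ≥ N and all integers 1 ≤ k ≤ n, |M_{n,k} − β_n · s_{n,k}| ≤ C · β_n · |s_{n,k}| · (log n)/n; that is, M_{n,k} = β_n s_{n,k} (1 + O(n^{−1} log n)) uniformly in 1 ≤ k ≤ n. -/
open Finset

/-- A set partition of `Fin n`: a finite family of nonempty blocks such that
every element lies in exactly one block. -/
def IsSetPartition {n : ℕ} (P : Finset (Finset (Fin n))) : Prop :=
  (∀ B ∈ P, B.Nonempty) ∧ ∀ x : Fin n, ∃! B, B ∈ P ∧ x ∈ B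

/-- The Bell number `B n`: the number of set partitions of an `n`-element set. -/
noncomputable def bell (n : ℕ) : ℕ :=
  Nat.card {P : Finset (Finset (Fin n)) // IsSetPartition P}

/-- `beta n`: the number of set partitions of an `n`-element set with no singleton blocks. -/
noncomputable def beta (n : ℕ) : ℕ :=
  Nat.card {P : Finset (Finset (Fin n)) // IsSetPartition P ∧ ∀ B ∈ P, 2 ≤ B.card}

/-- Signed Stirling numbers of the first kind, defined by
`∑ k, stirS n k * z ^ k = z (z-1) ⋯ (z-n+1)`. -/
def stirS : ℕ → ℕ → ℤ
  | 0, 0 => 1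
  | 0, _ + 1 => 0
  | _ + 1, 0 => 0
  | n + 1, k + 1 => stirS n k - (n : ℤ) * stirS n (k + 1)

/-- Unsigned Stirling numbers of the first kind (number of permutations of `n`
elements with `k` cycles). -/
def stirU : ℕ → ℕ → ℕ
  | 0, 0 => 1
  | 0, _ + 1 => 0
  | _ + 1, 0 => 0
  | n + 1, k + 1 => stirU n k + n * stirU n (k + 1)

/-- The Matsunaga numbers `M n k`, defined by the recurrence
`M n k = n * M (n-1) k + beta n * stirS n k` for `1 ≤ k ≤ n`, and `0` whenever
`n ≤ 1`, `k ≤ 0` or `k > n`. -/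
noncomputable def matsunaga : ℕ → ℕ → ℤ
  | 0, _ => 0
  | 1, _ => 0
  | n + 2, k =>
      if 1 ≤ k ∧ k ≤ n + 2 then
        ((n : ℤ) + 2) * matsunaga (n + 1) k + (beta (n + 2) : ℤ) * stirS (n + 2) k
      else 0

open Classical in
noncomputable def TP (n : ℕ) : Finset (Finset (Finset (Fin n))) :=
  Finset.univ.filter (fun P => IsSetPartition P ∧ ∀ B ∈ P, 2 ≤ B.card)

theorem beta_eq_TP (n : ℕ) : beta n = (TP n).card := by
  classical
  unfold beta TP
  rw [Nat.card_eq_fintype_card, Fintype.card_subtype]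

theorem mem_TP {n : ℕ} {P : Finset (Finset (Fin n))} :
    P ∈ TP n ↔ IsSetPartition P ∧ ∀ B ∈ P, 2 ≤ B.card := by
  classical
  simp [TP]

noncomputable def gB {n : ℕ} (B A : Finset (Fin n)) : Finset (Fin (n+1)) :=
  if A = B then insert (Fin.last n) (A.map Fin.castSuccEmb) else A.map Fin.castSuccEmb

def restr {n : ℕ} (S : Finset (Fin (n+1))) : Finset (Fin n) :=
  Finset.univ.filter (fun i => Fin.castSucc i ∈ S)

theorem castSucc_mem_gB {n : ℕ} (B A : Finset (Fin n)) (i : Fin n) :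
    Fin.castSucc i ∈ gB B A ↔ i ∈ A := by
  unfold gB
  split_ifs <;> simp [Fin.castSucc_ne_last]

theorem last_mem_gB {n : ℕ} (B A : Finset (Fin n)) :
    Fin.last n ∈ gB B A ↔ A = B := by
  unfold gB
  split_ifs <;> simp [*, Fin.castSucc_ne_last]

theorem restr_gB {n : ℕ} (B A : Finset (Fin n)) : restr (gB B A) = A := by
  ext i; simp [restr, castSucc_mem_gB]

theorem gB_inj {n : ℕ} (B : Finset (Fin n)) : Function.Injective (gB B) := by
  intro A A' h
  rw [← restr_gB B A, h, restr_gB]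

noncomputable def Phi {n : ℕ} (P : Finset (Finset (Fin n))) (B : Finset (Fin n)) :
    Finset (Finset (Fin (n+1))) := P.image (gB B)

theorem Phi_card {n : ℕ} (P : Finset (Finset (Fin n))) (B : Finset (Fin n)) :
    (Phi P B).card = P.card := Finset.card_image_of_injective _ (gB_inj B)

theorem Phi_mem {n : ℕ} {P : Finset (Finset (Fin n))} {B : Finset (Fin n)}
    (hP : P ∈ TP n) (hB : B ∈ P) : Phi P B ∈ TP (n+1) := by
  rw [mem_TP] at *
  obtain ⟨⟨h1, h2⟩, h3⟩ := hP
  refine ⟨⟨?_, ?_⟩, ?_⟩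
  · intro S hS
    obtain ⟨A, hA, rfl⟩ := Finset.mem_image.1 hS
    obtain ⟨i, hi⟩ := h1 A hA
    exact ⟨i.castSucc, (castSucc_mem_gB B A i).2 hi⟩
  · intro x
    refine Fin.lastCases ?_ (fun i => ?_) x
    · refine ⟨gB B B, ⟨Finset.mem_image_of_mem _ hB, (last_mem_gB B B).2 rfl⟩, ?_⟩
      rintro S ⟨hS, hS2⟩
      obtain ⟨A, hA, rfl⟩ := Finset.mem_image.1 hS
      rw [last_mem_gB] at hS2
      rw [hS2]
    · obtain ⟨A, ⟨hA, hiA⟩, hu⟩ := h2 i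
      refine ⟨gB B A, ⟨Finset.mem_image_of_mem _ hA, (castSucc_mem_gB B A i).2 hiA⟩, ?_⟩
      rintro S ⟨hS, hS2⟩
      obtain ⟨A', hA', rfl⟩ := Finset.mem_image.1 hS
      rw [castSucc_mem_gB] at hS2
      rw [hu A' ⟨hA', hS2⟩]
  · intro S hS
    obtain ⟨A, hA, rfl⟩ := Finset.mem_image.1 hS
    calc 2 ≤ A.card := h3 A hA
      _ = (A.map Fin.castSuccEmb).card := (Finset.card_map _).symm
      _ ≤ _ := by
        apply Finset.card_le_card
        unfold gB
        split_ifs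
        · exact Finset.subset_insert _ _
        · exact subset_rfl

theorem Phi_inj {n : ℕ} {P P' : Finset (Finset (Fin n))} {B B' : Finset (Fin n)}
    (hB : B ∈ P) (h : Phi P B = Phi P' B') : P = P' ∧ B = B' := by
  have key : ∀ (Q : Finset (Finset (Fin n))) (D), (Phi Q D).image restr = Q := by
    intro Q D
    unfold Phi
    rw [Finset.image_image]
    ext A
    simp [restr_gB]
  refine ⟨by rw [← key P B, h, key], ?_⟩
  have : gB B B ∈ Phi P' B' := h ▸ Finset.mem_image_of_mem _ hB
  obtain ⟨A, hA, hAe⟩ := Finset.mem_image.1 this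
  have h2 : Fin.last n ∈ gB B' A := by rw [hAe, last_mem_gB]
  rw [last_mem_gB] at h2
  subst h2
  rw [← restr_gB B B, ← hAe, restr_gB]

theorem sum_card_le (n : ℕ) (p : ℕ → Prop) [DecidablePred p] :
    ∑ P ∈ (TP n).filter (fun P => p P.card), P.card
      ≤ ((TP (n+1)).filter (fun P => p P.card)).card := by
  rw [← Finset.card_sigma ((TP n).filter (fun P => p P.card)) (fun P => P)]
  apply Finset.card_le_card_of_injOn (fun x => Phi x.1 x.2)
  · rintro ⟨P, B⟩ h
    simp only [Finset.coe_sigma, Set.mem_sigma_iff, Finset.mem_coe, Finset.mem_filter] at h ⊢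
    exact ⟨Phi_mem h.1.1 h.2, by rw [Phi_card]; exact h.1.2⟩
  · rintro ⟨P, B⟩ h ⟨P', B'⟩ h' he
    simp only [Finset.coe_sigma, Set.mem_sigma_iff, Finset.mem_coe, Finset.mem_filter] at h he
    obtain ⟨rfl, rfl⟩ := Phi_inj h.2 he
    rfl

theorem pair_exists (K : ℕ) : ∃ P ∈ TP (2*K), P.card = K := by
  classical
  let f : Fin K → Finset (Fin (2*K)) := fun j =>
    Finset.univ.filter (fun i : Fin (2*K) => i.val / 2 = j.val)
  have hf0 : ∀ j : Fin K, (⟨2*j.val, by omega⟩ : Fin (2*K)) ∈ f j := by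
    intro j; simp [f]
  have hf1 : ∀ j : Fin K, (⟨2*j.val+1, by omega⟩ : Fin (2*K)) ∈ f j := by
    intro j; simp [f]; omega
  have hinj : Function.Injective f := by
    intro j j' h
    have := hf0 j
    rw [h] at this
    simp [f] at this
    exact Fin.ext this
  refine ⟨Finset.univ.image f, ?_, ?_⟩
  · rw [mem_TP]
    refine ⟨⟨?_, ?_⟩, ?_⟩
    · intro S hS
      obtain ⟨j, -, rfl⟩ := Finset.mem_image.1 hS
      exact ⟨_, hf0 j⟩
    · intro x
      refine ⟨f ⟨x.val/2, by omega⟩, ⟨Finset.mem_image_of_mem _ (Finset.mem_univ _), by simp [f]⟩, ?_⟩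
      rintro S ⟨hS, hx⟩
      obtain ⟨j, -, rfl⟩ := Finset.mem_image.1 hS
      congr 1
      simp [f] at hx
      exact Fin.ext hx.symm
    · intro S hS
      obtain ⟨j, -, rfl⟩ := Finset.mem_image.1 hS
      have : 1 < (f j).card := Finset.one_lt_card.2 ⟨_, hf0 j, _, hf1 j, by simp [Fin.ext_iff]⟩
      omega
  · rw [Finset.card_image_of_injective _ hinj]; simp

theorem pow_le_beta (K d : ℕ) : K ^ d ≤ beta (2*K+d) := by
  suffices h : K ^ d ≤ ((TP (2*K+d)).filter (fun P => P.card = K)).card by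
    rw [beta_eq_TP]
    exact h.trans (Finset.card_le_card (Finset.filter_subset _ _))
  induction d with
  | zero =>
    obtain ⟨P, hP, hc⟩ := pair_exists K
    simp only [pow_zero]
    exact Finset.card_pos.2 ⟨P, Finset.mem_filter.2 ⟨hP, hc⟩⟩
  | succ d ih =>
    have := sum_card_le (2*K+d) (fun c => c = K)
    rw [Finset.sum_congr rfl (fun P hP => (Finset.mem_filter.1 hP).2)] at this
    rw [Finset.sum_const, smul_eq_mul] at this
    rw [pow_succ]
    exact (Nat.mul_le_mul_right K ih).trans this

theorem small_le (n m : ℕ) : ((TP n).filter (fun P => P.card ≤ m)).card ≤ m ^ n := by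
  classical
  let F : (Fin n → Fin m) → Finset (Finset (Fin n)) := fun f =>
    Finset.univ.image (fun x => Finset.univ.filter (fun y => f y = f x))
  have hsub : (TP n).filter (fun P => P.card ≤ m) ⊆ Finset.univ.image F := by
    intro P hP
    rw [Finset.mem_filter, mem_TP] at hP
    obtain ⟨⟨⟨h1, h2⟩, -⟩, hc⟩ := hP
    have : Fintype.card P ≤ Fintype.card (Fin m) := by simpa using hc
    obtain ⟨e⟩ := Function.Embedding.nonempty_of_card_le this
    choose b hb hu using h2
    rw [Finset.mem_image]
    refine ⟨fun x => e ⟨b x, (hb x).1⟩, Finset.mem_univ _, ?_⟩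
    have hblock : ∀ x, (Finset.univ.filter (fun y => e ⟨b y, (hb y).1⟩ = e ⟨b x, (hb x).1⟩)) = b x := by
      intro x
      ext y
      simp only [Finset.mem_filter, Finset.mem_univ, true_and, e.injective.eq_iff, Subtype.mk.injEq]
      constructor
      · intro h; rw [← h]; exact (hb y).2
      · intro h; exact (hu y _ ⟨(hb x).1, h⟩).symm
    ext B
    simp only [F, Finset.mem_image, Finset.mem_univ, true_and, hblock]
    constructor
    · rintro ⟨x, rfl⟩; exact (hb x).1
    · intro hB
      obtain ⟨x, hx⟩ := h1 B hB
      exact ⟨x, (hu x B ⟨hB, hx⟩).symm⟩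
  calc _ ≤ _ := Finset.card_le_card hsub
    _ ≤ _ := Finset.card_image_le
    _ = m ^ n := by simp

theorem beta_succ_ge (n m : ℕ) (h : 2 * m ^ n ≤ beta n) :
    (m + 1) * beta n ≤ 2 * beta (n+1) := by
  have h1 := sum_card_le n (fun _ => True)
  simp only [Finset.filter_true, ← beta_eq_TP] at h1
  have h2 := small_le n m
  have h3 : ((TP n).filter (fun P => P.card ≤ m)).card +
      ((TP n).filter (fun P => ¬ P.card ≤ m)).card = beta n := by
    rw [beta_eq_TP]; exact Finset.card_filter_add_card_filter_not _
  have h4 : ((TP n).filter (fun P => ¬ P.card ≤ m)).card * (m+1) ≤ ∑ P ∈ TP n, P.card := by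
    rw [← smul_eq_mul]
    refine (Finset.card_nsmul_le_sum _ _ (m+1) ?_).trans
      (Finset.sum_le_sum_of_subset (Finset.filter_subset _ _))
    intro P hP
    have := (Finset.mem_filter.1 hP).2
    omega
  nlinarith

theorem beta_pos (n : ℕ) (h : 2 ≤ n) : 0 < beta n := by
  have := pow_le_beta 1 (n-2)
  rw [show 2*1+(n-2) = n by omega, one_pow] at this
  exact this

theorem beta_ratio (n : ℕ) (hn : 8 ≤ n) :
    (n : ℝ) * beta n ≤ 64 * Real.log n * beta (n+1) := by
  have hn' : (8:ℝ) ≤ n := by exact_mod_cast hn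
  set L := Real.log n with hL
  have hL2 : 2 ≤ L := by
    rw [hL, Real.le_log_iff_exp_le (by linarith)]
    have : Real.exp 2 = Real.exp 1 ^ 2 := by rw [← Real.exp_nat_mul]; norm_num
    rw [this]
    nlinarith [Real.exp_one_lt_d9, Real.exp_pos 1]
  have hLn : 2 * L ≤ n := by
    have h1 := Real.log_le_sub_one_of_pos (x := (n:ℝ)/2) (by linarith)
    rw [Real.log_div (by linarith) (by norm_num)] at h1
    have := Real.log_two_lt_d9
    linarith
  set K := ⌊(n:ℝ)/L⌋₊ with hK
  have hKle : (K:ℝ) * L ≤ n := by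
    have : (K:ℝ) ≤ n / L := Nat.floor_le (by positivity)
    rwa [le_div_iff₀ (by linarith)] at this
  have hKge : (n:ℝ) ≤ 2 * L * K := by
    have h1 : (n:ℝ)/L < K + 1 := Nat.lt_floor_add_one _
    rw [div_lt_iff₀ (by linarith)] at h1
    nlinarith
  have hK2n : 2 * K ≤ n := by
    have : (2:ℝ) * K ≤ n := by nlinarith [Nat.cast_nonneg (α := ℝ) K]
    exact_mod_cast this
  have hKpos : (0:ℝ) < K := by
    by_contra hc
    nlinarith
  have hlb : (K:ℝ)^(n-2*K) ≤ beta n := by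
    have := pow_le_beta K (n-2*K)
    rw [show 2*K+(n-2*K) = n by omega] at this
    exact_mod_cast this
  have hKK : (K:ℝ)^(2*K) ≤ Real.exp 2 ^ n := by
    rw [← Real.exp_nat_mul]
    rw [← Real.log_le_iff_le_exp (by positivity), Real.log_pow]
    have : Real.log K ≤ L := Real.log_le_log hKpos (by
      have : K ≤ n := by omega
      exact_mod_cast this)
    push_cast
    nlinarith
  have hm : 2 * (K/16)^n ≤ beta n := by
    have e2 : Real.exp 2 ≤ 8 := by
      have : Real.exp 2 = Real.exp 1 ^ 2 := by rw [← Real.exp_nat_mul]; norm_num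
      rw [this]
      nlinarith [Real.exp_one_lt_d9, Real.exp_pos 1]
    have h1 : (16:ℝ) * ((K/16 : ℕ):ℝ) ≤ K := by
      have : 16 * (K/16) ≤ K := by omega
      exact_mod_cast this
    have h2 : ((16:ℝ) * ((K/16 : ℕ):ℝ))^n ≤ beta n * 8^n := by
      calc _ ≤ (K:ℝ)^n := by gcongr
        _ = (K:ℝ)^(n-2*K) * (K:ℝ)^(2*K) := by rw [← pow_add]; congr 1; omega
        _ ≤ beta n * Real.exp 2 ^ n := by gcongr
        _ ≤ _ := by gcongr
    rw [mul_pow, show (16:ℝ) = 2 * 8 by norm_num, mul_pow] at h2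
    have h8 : (0:ℝ) < 8^n := by positivity
    have h3 : (2:ℝ)^n * ((K/16 : ℕ):ℝ)^n ≤ beta n := by
      by_contra hc
      push Not at hc
      nlinarith
    have h4 : (2:ℝ) ≤ 2^n := by
      calc (2:ℝ) = 2^1 := by norm_num
        _ ≤ 2^n := pow_le_pow_right₀ (by norm_num) (by omega)
    have h5 : (2:ℝ) * ((K/16 : ℕ):ℝ)^n ≤ beta n := by
      refine le_trans ?_ h3
      gcongr
    exact_mod_cast h5
  have hf := beta_succ_ge n _ hm
  have hf' : (((K/16 : ℕ):ℝ)+1) * beta n ≤ 2 * beta (n+1) := by exact_mod_cast hf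
  have hk16 : (K:ℝ) ≤ 16 * (((K/16 : ℕ):ℝ)+1) := by
    have : K ≤ 16 * (K/16 + 1) := by omega
    exact_mod_cast this
  have hb : (0:ℝ) ≤ beta n := Nat.cast_nonneg _
  calc (n:ℝ) * beta n ≤ (2 * L * K) * beta n := by gcongr
    _ ≤ (2 * L * (16 * (((K/16 : ℕ):ℝ)+1))) * beta n := by gcongr
    _ = 32 * L * ((((K/16 : ℕ):ℝ)+1) * beta n) := by ring
    _ ≤ 32 * L * (2 * beta (n+1)) := by gcongr
    _ = _ := by ring

theorem stirS_eq (n k : ℕ) : stirS n k = (-1)^(n+k) * (stirU n k : ℤ) := by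
  induction n generalizing k with
  | zero => cases k <;> simp [stirS, stirU]
  | succ n ih =>
    cases k with
    | zero => simp [stirS, stirU]
    | succ k =>
      simp only [stirS, stirU, ih]
      push_cast
      ring

theorem abs_stirS (n k : ℕ) : |(stirS n k : ℝ)| = stirU n k := by
  rw [stirS_eq]; push_cast; simp [abs_mul]

theorem stirU_step (n k : ℕ) (hk : 1 ≤ k) : n * stirU n k ≤ stirU (n+1) k := by
  obtain ⟨k, rfl⟩ : ∃ j, k = j + 1 := ⟨k-1, by omega⟩
  simp [stirU]

theorem stirU_pos (n k : ℕ) (hk : 1 ≤ k) (hkn : k ≤ n) : 0 < stirU n k := by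
  induction n generalizing k with
  | zero => omega
  | succ n ih =>
    obtain ⟨k, rfl⟩ : ∃ j, k = j + 1 := ⟨k-1, by omega⟩
    simp only [stirU]
    by_cases h : k + 1 ≤ n
    · have := ih (k+1) (by omega) h
      have : 0 < n * stirU n (k+1) := Nat.mul_pos (by omega) this
      omega
    · have hk' : k = n := by omega
      subst hk'
      rcases Nat.eq_zero_or_pos k with rfl | h0
      · simp [stirU]
      · have := ih k h0 le_rfl
        omega

theorem mats_zero (n k : ℕ) (h : ¬ (1 ≤ k ∧ k ≤ n)) : matsunaga n k = 0 := by
  match n with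
  | 0 => simp [matsunaga]
  | 1 => simp [matsunaga]
  | n+2 => rw [matsunaga, if_neg h]

theorem mats_step (n k : ℕ) (hn : 1 ≤ n) (hk : 1 ≤ k) (hkn : k ≤ n + 1) :
    (matsunaga (n+1) k : ℝ) = (n+1) * matsunaga n k + beta (n+1) * stirS (n+1) k := by
  obtain ⟨n, rfl⟩ : ∃ j, n = j + 1 := ⟨n-1, by omega⟩
  rw [matsunaga, if_pos ⟨hk, hkn⟩]
  push_cast
  ring

theorem step_bound (n k : ℕ) (hn : 8 ≤ n) (hk : 1 ≤ k) (A : ℝ) (hA : 0 ≤ A)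
    (h : |(matsunaga n k : ℝ)| ≤ A * (beta n * stirU n k)) :
    ((n:ℝ)+1) * |(matsunaga n k : ℝ)| ≤
      A * (128 * (Real.log n / n)) * (beta (n+1) * stirU (n+1) k) := by
  have hn' : (8:ℝ) ≤ n := by exact_mod_cast hn
  have h1 := beta_ratio n hn
  have h2 : (n:ℝ) * stirU n k ≤ stirU (n+1) k := by exact_mod_cast stirU_step n k hk
  have hl : 0 ≤ Real.log n := Real.log_nonneg (by linarith)
  have h3 : ((n:ℝ) * beta n) * (n * stirU n k) ≤ (64 * Real.log n * beta (n+1)) * stirU (n+1) k := by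
    gcongr
  have h4 : (beta n : ℝ) * stirU n k ≤ (64 * Real.log n * beta (n+1)) * stirU (n+1) k / (n*n) := by
    rw [le_div_iff₀ (by positivity)]; linarith
  calc _ ≤ (2 * n) * (A * ((64 * Real.log n * beta (n+1)) * stirU (n+1) k / (n*n))) := by
        gcongr
        · linarith
        · exact h.trans (by gcongr)
    _ = _ := by field_simp; ring

theorem log_small : ∃ N : ℕ, 8 ≤ N ∧ ∀ n : ℕ, N ≤ n → 128 * (Real.log n / n) ≤ 1/2 := by
  have h := Real.isLittleO_log_id_atTop.tendsto_div_nhds_zero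
  have h2 := h.comp (tendsto_natCast_atTop_atTop (R := ℝ))
  have h3 := h2.eventually (gt_mem_nhds (show (0:ℝ) < 1/256 by norm_num))
  obtain ⟨N, hN⟩ := Filter.eventually_atTop.1 h3
  refine ⟨max N 8, le_max_right _ _, fun n hn => ?_⟩
  have := hN n ((le_max_left _ _).trans hn)
  simp at this
  linarith

theorem mats_bound : ∃ A : ℝ, 2 ≤ A ∧ ∃ N : ℕ, 8 ≤ N ∧ ∀ n : ℕ, N ≤ n → ∀ k,
    |(matsunaga n k : ℝ)| ≤ A * (beta n * stirU n k) := by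
  obtain ⟨N, hN8, hN⟩ := log_small
  set S := ∑ k ∈ Finset.range (N+1), |(matsunaga N k : ℝ)| with hS
  have hS0 : 0 ≤ S := Finset.sum_nonneg (fun _ _ => abs_nonneg _)
  refine ⟨2 + S, by linarith, N, hN8, fun n hn => ?_⟩
  induction n, hn using Nat.le_induction with
  | base =>
    intro k
    by_cases hk : 1 ≤ k ∧ k ≤ N
    · have h1 : (1:ℝ) ≤ beta N * stirU N k := by
        exact_mod_cast Nat.mul_pos (beta_pos N (by omega)) (stirU_pos N k hk.1 hk.2)
      have h2 : |(matsunaga N k : ℝ)| ≤ S :=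
        Finset.single_le_sum (f := fun k => |(matsunaga N k : ℝ)|) (fun _ _ => abs_nonneg _)
          (Finset.mem_range.2 (by omega))
      nlinarith
    · rw [mats_zero N k hk]; simp; positivity
  | succ n hn ih =>
    intro k
    by_cases hk : 1 ≤ k ∧ k ≤ n + 1
    · have hb := step_bound n k (by omega) hk.1 (2+S) (by linarith) (ih k)
      rw [mats_step n k (by omega) hk.1 hk.2]
      have hX : (0:ℝ) ≤ beta (n+1) * stirU (n+1) k := by positivity
      have h1 : (2+S) * (128 * (Real.log n / n)) * (beta (n+1) * stirU (n+1) k) ≤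
          (2+S) * (1/2) * (beta (n+1) * stirU (n+1) k) := by
        have := hN n hn
        gcongr
      calc _ ≤ |((n:ℝ)+1) * matsunaga n k| + |(beta (n+1):ℝ) * stirS (n+1) k| := abs_add_le _ _
        _ = ((n:ℝ)+1) * |(matsunaga n k:ℝ)| + beta (n+1) * stirU (n+1) k := by
          rw [abs_mul, abs_mul, abs_stirS, abs_of_nonneg (by positivity : (0:ℝ) ≤ (n:ℝ)+1),
            Nat.abs_cast]
        _ ≤ _ := by nlinarith
    · rw [mats_zero (n+1) k hk]; simp; positivity

/-- Uniformly for `1 ≤ k ≤ n`: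
`M n k = beta n * s n k * (1 + O(n⁻¹ log n))`, i.e. there are `C > 0` and `N`
such that for all `n ≥ N` and `1 ≤ k ≤ n`,
`|M n k - beta n * s n k| ≤ C * beta n * |s n k| * (log n) / n`. -/
theorem matsunaga_asymptotic_uniform :
    ∃ C : ℝ, 0 < C ∧ ∃ N : ℕ, ∀ n : ℕ, N ≤ n → ∀ k : ℕ, 1 ≤ k → k ≤ n →
      |(matsunaga n k : ℝ) - (beta n : ℝ) * (stirS n k : ℝ)| ≤
        C * (beta n : ℝ) * |(stirS n k : ℝ)| * Real.log n / n := by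
  obtain ⟨A, hA, N, hN8, hN⟩ := mats_bound
  refine ⟨256 * A, by linarith, N + 1, fun n hn k hk hkn => ?_⟩
  obtain ⟨n, rfl⟩ : ∃ j, n = j + 1 := ⟨n-1, by omega⟩
  have hb := step_bound n k (by omega) hk A (by linarith) (hN n (by omega) k)
  rw [mats_step n k (by omega) hk hkn, add_sub_cancel_right, abs_mul,
    abs_of_nonneg (by positivity : (0:ℝ) ≤ (n:ℝ)+1), abs_stirS]
  refine hb.trans ?_
  have hn1 : (1:ℝ) ≤ n := by exact_mod_cast (by omega : 1 ≤ n)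
  have hl0 : 0 ≤ Real.log n := Real.log_nonneg hn1
  have hl : Real.log n / n ≤ 2 * (Real.log ((n+1 : ℕ):ℝ) / ((n+1 : ℕ):ℝ)) := by
    have : Real.log n ≤ Real.log ((n+1 : ℕ):ℝ) :=
      Real.log_le_log (by linarith) (by push_cast; linarith)
    rw [← mul_div_assoc, div_le_div_iff₀ (by linarith) (by positivity)]
    push_cast at this ⊢
    nlinarith
  calc _ ≤ A * (128 * (2 * (Real.log ((n+1 : ℕ):ℝ) / ((n+1 : ℕ):ℝ)))) * (beta (n+1) * stirU (n+1) k) := by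
        gcongr
    _ = _ := by ring
end

section
/- There exist a constant C > 0 and an integer N such that for all n ≥ N, if w > 0 is the unique positive real with w·e^w = n, then | β_n · √(w+1) · e^{−(w + 1/w − 1)·n + w + 1} − 1 | ≤ C·(log n)/n; in particular β_n is asymptotic to e^{(w + 1/w − 1)n − w − 1} / √(w+1) as n → ∞. -/
open Finset

/-- Auxiliary recursive form of `beta`. -/
def bq : ℕ → ℕ
  | 0 => 1
  | n + 1 => ∑ k : Fin n, n.choose k * bq k

/-- Being a singleton-free partition of a finset. -/
def IsPt {α : Type*} (s : Finset α) (P : Finset (Finset α)) : Prop :=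
  (∀ B ∈ P, B ⊆ s ∧ 2 ≤ B.card) ∧ ∀ x ∈ s, ∃! B, B ∈ P ∧ x ∈ B

open Classical in
/-- The singleton-free partitions of a finset. -/
noncomputable def pts {α : Type*} (s : Finset α) : Finset (Finset (Finset α)) :=
  s.powerset.powerset.filter (IsPt s)

lemma mem_pts {α : Type*} {s : Finset α} {P : Finset (Finset α)} :
    P ∈ pts s ↔ IsPt s P := by
  classical
  unfold pts
  rw [mem_filter, mem_powerset]
  refine ⟨fun h => h.2, fun h => ⟨fun B hB => mem_powerset.2 (h.1 B hB).1, h⟩⟩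

open Classical in
lemma card_pts_insert {α : Type*} (s : Finset α) (a : α) (ha : a ∉ s) :
    (pts (insert a s)).card = ∑ U ∈ s.ssubsets, (pts U).card := by
  rw [← card_sigma]
  symm
  refine card_bij (fun x _ => insert (insert a (s \ x.1)) x.2) ?_ ?_ ?_
  · rintro ⟨U, Q⟩ h
    simp only [mem_sigma, mem_ssubsets, mem_pts] at h ⊢
    obtain ⟨hU, hQ1, hQ2⟩ := h
    have hUs := hU.1
    obtain ⟨y, hys, hyU⟩ := exists_of_ssubset hU
    refine ⟨?_, ?_⟩
    · intro B hB
      rcases mem_insert.1 hB with rfl | hB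
      · refine ⟨insert_subset_insert _ sdiff_subset, ?_⟩
        rw [card_insert_of_notMem (by simp [ha])]
        have : 0 < (s \ U).card := card_pos.2 ⟨y, by simp [hys, hyU]⟩
        omega
      · exact ⟨(hQ1 B hB).1.trans (hUs.trans (subset_insert _ _)), (hQ1 B hB).2⟩
    · intro x hx
      by_cases hxU : x ∈ U
      · obtain ⟨B, ⟨hB, hxB⟩, hu⟩ := hQ2 x hxU
        refine ⟨B, ⟨mem_insert_of_mem hB, hxB⟩, ?_⟩
        rintro B' ⟨hB', hxB'⟩
        rcases mem_insert.1 hB' with rfl | hB'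
        · exfalso
          rcases mem_insert.1 hxB' with rfl | h
          · exact ha (hUs hxU)
          · exact (mem_sdiff.1 h).2 hxU
        · exact hu B' ⟨hB', hxB'⟩
      · refine ⟨insert a (s \ U), ⟨mem_insert_self _ _, ?_⟩, ?_⟩
        · rcases mem_insert.1 hx with rfl | h
          · exact mem_insert_self _ _
          · exact mem_insert_of_mem (mem_sdiff.2 ⟨h, hxU⟩)
        · rintro B' ⟨hB', hxB'⟩
          rcases mem_insert.1 hB' with rfl | hB'
          · rfl
          · exact absurd ((hQ1 B' hB').1 hxB') hxU
  · rintro ⟨U, Q⟩ h ⟨U', Q'⟩ h' heq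
    simp only [mem_sigma, mem_ssubsets, mem_pts] at h h' heq
    obtain ⟨hU, hQ1, hQ2⟩ := h
    obtain ⟨hU', hQ1', hQ2'⟩ := h'
    have key : ∀ (V : Finset α) (R : Finset (Finset α)), V ⊂ s → (∀ B ∈ R, B ⊆ V ∧ 2 ≤ B.card) →
        ∀ B ∈ R, a ∉ B := fun V R hV hR B hB haB => ha (hV.1 ((hR B hB).1 haB))
    have e1 : insert a (s \ U) = insert a (s \ U') := by
      have : insert a (s \ U) ∈ insert (insert a (s \ U')) Q' := heq ▸ mem_insert_self _ _
      rcases mem_insert.1 this with h | h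
      · exact h
      · exact absurd (mem_insert_self _ _) (key U' Q' hU' hQ1' _ h)
    have e2 : s \ U = s \ U' := by
      have := congrArg (fun t => erase t a) e1
      simpa [erase_insert, ha] using this
    have e3 : U = U' := by
      rw [← Finset.sdiff_sdiff_eq_self hU.1, e2, Finset.sdiff_sdiff_eq_self hU'.1]
    have e4 : Q = Q' := by
      have n1 : insert a (s \ U) ∉ Q := fun h => key U Q hU hQ1 _ h (mem_insert_self _ _)
      have n2 : insert a (s \ U') ∉ Q' := fun h => key U' Q' hU' hQ1' _ h (mem_insert_self _ _)
      rw [← erase_insert n1, ← erase_insert n2, heq, e1]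
    subst e3 e4
    rfl
  · intro P hP
    rw [mem_pts] at hP
    obtain ⟨hP1, hP2⟩ := hP
    obtain ⟨B, ⟨hB, haB⟩, hu⟩ := hP2 a (mem_insert_self _ _)
    have hBs := (hP1 B hB).1
    have hBe : insert a (s \ (s \ B)) = B := by
      ext x
      simp only [mem_insert, mem_sdiff, not_and, not_not]
      constructor
      · rintro (rfl | ⟨h1, h2⟩)
        · exact haB
        · exact h2 h1
      · intro hx
        rcases mem_insert.1 (hBs hx) with rfl | h
        · exact Or.inl rfl
        · exact Or.inr ⟨h, fun _ => hx⟩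
    have hdis : ∀ B' ∈ P, ∀ x ∈ B', x ∈ B → B' = B := by
      intro B' hB' x hx hxB
      exact (hP2 x (hBs hxB)).unique ⟨hB', hx⟩ ⟨hB, hxB⟩
    refine ⟨⟨s \ B, P.erase B⟩, ?_, ?_⟩
    · simp only [mem_sigma, mem_ssubsets, mem_pts]
      refine ⟨?_, ?_, ?_⟩
      · obtain ⟨y, hyB, hya⟩ := exists_mem_ne (by have := (hP1 B hB).2; omega : 1 < B.card) a
        have hys : y ∈ s := (mem_insert.1 (hBs hyB)).resolve_left hya
        exact ⟨sdiff_subset, fun h => (mem_sdiff.1 (h hys)).2 hyB⟩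
      · intro B' hB'
        obtain ⟨hne, hB'⟩ := mem_erase.1 hB'
        refine ⟨fun x hx => mem_sdiff.2 ⟨?_, fun hxB => hne (hdis B' hB' x hx hxB)⟩, (hP1 B' hB').2⟩
        rcases mem_insert.1 ((hP1 B' hB').1 hx) with rfl | h
        · exact absurd (hdis B' hB' x hx haB) hne
        · exact h
      · intro x hx
        obtain ⟨hxs, hxB⟩ := mem_sdiff.1 hx
        obtain ⟨B', ⟨hB', hxB'⟩, hu'⟩ := hP2 x (mem_insert_of_mem hxs)
        refine ⟨B', ⟨mem_erase.2 ⟨fun h => hxB (h ▸ hxB'), hB'⟩, hxB'⟩, ?_⟩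
        rintro B'' ⟨h1, h2⟩
        exact hu' B'' ⟨(mem_erase.1 h1).2, h2⟩
    · simp only [hBe]
      exact insert_erase hB

lemma card_pts {α : Type*} (s : Finset α) : (pts s).card = bq s.card := by
  classical
  induction s using Finset.strongInduction with
  | H s ih =>
    rcases s.eq_empty_or_nonempty with rfl | ⟨a, ha⟩
    · have : pts (∅ : Finset α) = {∅} := by
        ext P
        rw [mem_pts, mem_singleton]
        constructor
        · intro h
          rw [eq_empty_iff_forall_notMem]
          intro B hB
          have h1 := h.1 B hB
          have h2 := card_le_card h1.1
          have h3 := h1.2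
          simp at h2
          simp [h2] at h3
        · rintro rfl
          exact ⟨by simp, by simp⟩
      rw [this]
      simp [bq]
    · have hne : a ∉ s.erase a := notMem_erase _ _
      have hs : insert a (s.erase a) = s := insert_erase ha
      have hc : s.card = (s.erase a).card + 1 := by rw [← card_insert_of_notMem hne, hs]
      rw [hc, bq]
      conv_lhs => rw [← hs]
      rw [card_pts_insert _ _ hne]
      rw [sum_congr rfl (fun U hU => ih U ?_)]
      · have h1 := sum_powerset_apply_card bq (x := s.erase a)
        rw [sum_range_succ, ← sum_erase_add _ _ (mem_powerset_self (s.erase a))] at h1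
        simp only [Nat.choose_self, smul_eq_mul, one_mul] at h1
        have h2 := Nat.add_right_cancel h1
        rw [Finset.sum_range] at h2
        exact h2
      · exact (mem_ssubsets.1 hU).trans (erase_ssubset ha)

lemma beta_eq_bq (n : ℕ) : beta n = bq n := by
  classical
  have h := card_pts (univ : Finset (Fin n))
  rw [card_univ, Fintype.card_fin] at h
  rw [← h, beta, ← Nat.card_eq_finsetCard]
  refine Nat.card_congr (Equiv.subtypeEquivRight fun P => ?_)
  rw [mem_pts]
  constructor
  · rintro ⟨⟨h1, h2⟩, h3⟩
    exact ⟨fun B hB => ⟨subset_univ _, h3 B hB⟩, fun x _ => h2 x⟩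
  · rintro ⟨h1, h2⟩
    exact ⟨⟨fun B hB => card_pos.1 (by have := (h1 B hB).2; omega), fun x => h2 x (mem_univ x)⟩,
      fun B hB => (h1 B hB).2⟩

/-- The exponential generating function. -/
noncomputable def Fg (z : ℂ) : ℂ := Complex.exp (Complex.exp z - 1 - z)

lemma Fg_contDiff {m : WithTop ℕ∞} : ContDiff ℂ m Fg := by
  unfold Fg
  fun_prop

lemma Fg_deriv : deriv Fg = fun z => (Complex.exp z - 1) * Fg z := by
  funext z
  have h : HasDerivAt Fg (Complex.exp (Complex.exp z - 1 - z) * (Complex.exp z - 1)) z := by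
    unfold Fg
    exact (((Complex.hasDerivAt_exp z).sub_const 1).sub (hasDerivAt_id z)).cexp
  rw [h.deriv, Fg, mul_comm]

lemma iter_exp_sub (i : ℕ) :
    iteratedDeriv i (fun z : ℂ => Complex.exp z - 1) 0 = if i = 0 then 0 else 1 := by
  rw [iteratedDeriv_fun_sub (by fun_prop) (by fun_prop), iteratedDeriv_const]
  have : iteratedDeriv i Complex.exp 0 = 1 := by
    rw [iteratedDeriv_eq_iterate, Complex.iter_deriv_exp, Complex.exp_zero]
  rw [this]
  split_ifs <;> simp

lemma Fg_iter (n : ℕ) : iteratedDeriv n Fg 0 = bq n := by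
  induction n using Nat.strong_induction_on with
  | _ n ih =>
    rcases n with _ | n
    · simp [Fg, bq]
    · rw [iteratedDeriv_succ', Fg_deriv, iteratedDeriv_fun_mul (by fun_prop) Fg_contDiff.contDiffAt,
        ← Finset.sum_range_reflect, Finset.sum_range_succ, bq, Finset.sum_range]
      have h0 : n + 1 - 1 - n = 0 := by omega
      rw [h0, iter_exp_sub]
      simp only [if_true, mul_zero, zero_mul, add_zero]
      push_cast
      refine Finset.sum_congr rfl fun k _ => ?_
      have hk := k.2
      have h2 : n - (n - (k : ℕ)) = k := by omega
      rw [h2, iter_exp_sub, if_neg (by omega), ih k (by omega), Nat.choose_symm (by omega)]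
      ring

/-- The integrand. -/
noncomputable def gI (n : ℕ) (w θ : ℝ) : ℂ :=
  Fg (w * Complex.exp (θ * Complex.I)) * Complex.exp (-(n * θ * Complex.I))

lemma gI_periodic (n : ℕ) (w : ℝ) : Function.Periodic (gI n w) (2 * Real.pi) := by
  intro θ
  unfold gI
  have h1 : Complex.exp (((θ + 2 * Real.pi : ℝ) : ℂ) * Complex.I) =
      Complex.exp (θ * Complex.I) := by
    push_cast
    rw [add_mul]
    exact Complex.exp_periodic _
  have h2 : Complex.exp (-(n * ((θ + 2 * Real.pi : ℝ) : ℂ) * Complex.I)) =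
      Complex.exp (-(n * θ * Complex.I)) := by
    have : -(n * ((θ + 2 * Real.pi : ℝ) : ℂ) * Complex.I) =
      (-(n * θ * Complex.I)) - n * (2 * Real.pi * Complex.I) := by push_cast; ring
    rw [this]
    exact Complex.exp_periodic.sub_nat_mul_eq n
  rw [h1, h2]

lemma bq_integral (n : ℕ) (w : ℝ) (hw : 0 < w) :
    (bq n : ℂ) = n.factorial / (2 * Real.pi * w ^ n) * ∫ θ in (-Real.pi)..Real.pi, gI n w θ := by
  have hd : DifferentiableOn ℂ Fg (Metric.closedBall 0 w) :=
    ((Fg_contDiff (m := 1)).differentiable (by simp)).differentiableOn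
  have h := hd.circleIntegral_one_div_sub_center_pow_smul hw n
  have hw' : (w : ℂ) ≠ 0 := by exact_mod_cast hw.ne'
  have e : (∮ z in C(0, w), (1 / (z - 0) ^ (n + 1)) • Fg z) =
      Complex.I / w ^ n * ∫ θ in (-Real.pi)..Real.pi, gI n w θ := by
    have hp := (gI_periodic n w).intervalIntegral_add_eq (-Real.pi) 0
    have e1 : -Real.pi + 2 * Real.pi = Real.pi := by ring
    rw [e1, zero_add] at hp
    rw [hp, circleIntegral, ← intervalIntegral.integral_const_mul]
    congr 1
    funext θ
    rw [deriv_circleMap, gI]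
    simp only [circleMap, zero_add, sub_zero, smul_eq_mul]
    have hE : Complex.exp (-(n * θ * Complex.I)) = (Complex.exp (θ * Complex.I) ^ n)⁻¹ := by
      rw [← Complex.exp_nat_mul, ← Complex.exp_neg]
      congr 1
      ring
    rw [hE]
    have := Complex.exp_ne_zero (θ * Complex.I)
    field_simp
    ring
  rw [e, Fg_iter, smul_eq_mul] at h
  have hpi : (Real.pi : ℂ) ≠ 0 := by exact_mod_cast Real.pi_ne_zero
  have hf : (n.factorial : ℂ) ≠ 0 := by exact_mod_cast n.factorial_ne_zero
  have hI := Complex.I_ne_zero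
  field_simp at h ⊢
  linear_combination -h

lemma E_bounds (t : ℝ) (ht : |t| ≤ 1) (E : ℂ) (hE : E = Complex.exp (t * Complex.I) - 1) :
    ‖E‖ ≤ |t| ∧ ‖E - t * Complex.I‖ ≤ |t| ^ 2 ∧
    ‖E - t * Complex.I + t ^ 2 / 2‖ ≤ |t| ^ 3 ∧
    ‖E - t * Complex.I + t ^ 2 / 2 + t ^ 3 / 6 * Complex.I‖ ≤ |t| ^ 4 := by
  have hn : ‖(t : ℂ) * Complex.I‖ = |t| := by simp
  have hx : ‖(t : ℂ) * Complex.I‖ ≤ 1 := by rw [hn]; exact ht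
  have h0 := abs_nonneg t
  have I2 := Complex.I_sq
  have I3 : Complex.I ^ 3 = - Complex.I := by rw [pow_succ, I2]; ring
  refine ⟨?_, ?_, ?_, ?_⟩
  · rw [hE, mul_comm]; exact Real.norm_exp_I_mul_ofReal_sub_one_le
  · have h := Complex.exp_bound hx (n := 2) (by norm_num)
    rw [hn] at h
    refine le_trans (le_of_eq ?_) (h.trans ?_)
    · congr 1
      rw [hE]
      simp [Finset.sum_range_succ, Nat.factorial]
      ring
    · norm_num [Nat.factorial]
      nlinarith [sq_nonneg t]
  · have h := Complex.exp_bound hx (n := 3) (by norm_num)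
    rw [hn] at h
    refine le_trans (le_of_eq ?_) (h.trans ?_)
    · congr 1
      rw [hE]
      simp [Finset.sum_range_succ, Nat.factorial, mul_pow]
      ring
    · norm_num [Nat.factorial]
      nlinarith [pow_nonneg h0 3]
  · have h := Complex.exp_bound hx (n := 4) (by norm_num)
    rw [hn] at h
    refine le_trans (le_of_eq ?_) (h.trans ?_)
    · congr 1
      rw [hE]
      simp [Finset.sum_range_succ, Nat.factorial, mul_pow, I3]
      ring
    · norm_num [Nat.factorial]
      nlinarith [pow_nonneg h0 4]

lemma exp4 (u : ℂ) (hu : ‖u‖ ≤ 1) :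
    ‖Complex.exp u - 1 - (u + u ^ 2 / 2 + u ^ 3 / 6)‖ ≤ ‖u‖ ^ 4 := by
  have h := Complex.exp_bound hu (n := 4) (by norm_num)
  refine le_trans (le_of_eq ?_) (h.trans ?_)
  · congr 1
    simp [Finset.sum_range_succ, Nat.factorial]
    ring
  · norm_num [Nat.factorial]
    nlinarith [pow_nonneg (norm_nonneg u) 4]

lemma taylor4 (w t : ℝ) (hw : 1 ≤ w) (ht : w * |t| ≤ 1) (E : ℂ)
    (hE : E = Complex.exp (t * Complex.I) - 1) :
    ‖Complex.exp (w * E) - 1 - (w * t * Complex.I - (w + w ^ 2) * t ^ 2 / 2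
      - (w / 6 + w ^ 2 / 2 + w ^ 3 / 6) * t ^ 3 * Complex.I)‖ ≤ 6 * (w * |t|) ^ 4 := by
  have h0 := abs_nonneg t
  have ht1 : |t| ≤ 1 := by nlinarith
  obtain ⟨b1, b2, b3, b4⟩ := E_bounds t ht1 E hE
  have hnw : ‖(w : ℂ)‖ = w := by simp; linarith
  have hu : ‖(w : ℂ) * E‖ ≤ w * |t| := by
    rw [norm_mul, hnw]; gcongr
  have h4 := exp4 (w * E) (hu.trans ht)
  have h4' : ‖(w : ℂ) * E‖ ^ 4 ≤ (w * |t|) ^ 4 := by gcongr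
  have hnt : ‖(t : ℂ) * Complex.I‖ = |t| := by simp
  set a : ℂ := t * Complex.I with ha
  set e3 : ℂ := E - a + t ^ 2 / 2 with he3
  have I2 := Complex.I_sq
  -- second order
  have s2 : ‖E ^ 2 + t ^ 2 + t ^ 3 * Complex.I‖ ≤ 5 * |t| ^ 4 := by
    have : E ^ 2 + t ^ 2 + t ^ 3 * Complex.I
        = t ^ 4 / 4 + (E + (a - t ^ 2 / 2)) * e3 := by
      rw [he3, ha]; linear_combination ((t : ℂ) ^ 2) * I2
    rw [this]
    have n1 : ‖(t : ℂ) ^ 4 / 4‖ ≤ |t| ^ 4 := by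
      simp
      have := pow_nonneg h0 4
      linarith
    have n2 : ‖(t : ℂ) ^ 2 / 2‖ ≤ |t| := by
      simp
      nlinarith [sq_abs t]
    calc _ ≤ ‖(t : ℂ) ^ 4 / 4‖ + ‖(E + (a - t ^ 2 / 2)) * e3‖ := norm_add_le _ _
      _ ≤ |t| ^ 4 + (|t| + (|t| + |t|)) * |t| ^ 3 := by
          rw [norm_mul]
          gcongr
          refine (norm_add_le _ _).trans ?_
          gcongr
          refine (norm_sub_le _ _).trans ?_
          gcongr
          exact hnt.le
      _ ≤ _ := by nlinarith [pow_nonneg h0 4]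
  have s3 : ‖E ^ 3 + t ^ 3 * Complex.I‖ ≤ 3 * |t| ^ 4 := by
    have : E ^ 3 + t ^ 3 * Complex.I = (E - a) * (E ^ 2 + E * a + a ^ 2) := by
      rw [ha]; linear_combination (t : ℂ) ^ 3 * Complex.I * I2
    rw [this, norm_mul]
    have n1 : ‖E ^ 2 + E * a + a ^ 2‖ ≤ |t| ^ 2 + |t| * |t| + |t| ^ 2 := by
      refine (norm_add₃_le).trans ?_
      rw [norm_pow, norm_mul, norm_pow, hnt]
      gcongr
    calc _ ≤ |t| ^ 2 * (|t| ^ 2 + |t| * |t| + |t| ^ 2) := by gcongr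
      _ = _ := by ring
  have key : Complex.exp (w * E) - 1 - (w * t * Complex.I - (w + w ^ 2) * t ^ 2 / 2
      - (w / 6 + w ^ 2 / 2 + w ^ 3 / 6) * t ^ 3 * Complex.I)
      = (Complex.exp (w * E) - 1 - (w * E + (w * E) ^ 2 / 2 + (w * E) ^ 3 / 6))
        + w * (E - a + t ^ 2 / 2 + t ^ 3 / 6 * Complex.I)
        + w ^ 2 / 2 * (E ^ 2 + t ^ 2 + t ^ 3 * Complex.I)
        + w ^ 3 / 6 * (E ^ 3 + t ^ 3 * Complex.I) := by
    rw [ha]; ring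
  rw [key]
  have w2 : ‖(w : ℂ) ^ 2 / 2‖ = w ^ 2 / 2 := by simp
  have w3 : ‖(w : ℂ) ^ 3 / 6‖ = w ^ 3 / 6 := by
    rw [norm_div, norm_pow, hnw]; simp
  have t4 := pow_nonneg h0 4
  have p1 : w ≤ w ^ 4 := by simpa using pow_le_pow_right₀ hw (show 1 ≤ 4 by norm_num)
  have p2 : w ^ 2 ≤ w ^ 4 := pow_le_pow_right₀ hw (by norm_num)
  have p3 : w ^ 3 ≤ w ^ 4 := pow_le_pow_right₀ hw (by norm_num)
  calc _ ≤ (w * |t|) ^ 4 + w * |t| ^ 4 + w ^ 2 / 2 * (5 * |t| ^ 4)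
        + w ^ 3 / 6 * (3 * |t| ^ 4) := by
        refine (norm_add_le _ _).trans ?_
        refine add_le_add ((norm_add_le _ _).trans ?_) ?_
        · refine add_le_add ((norm_add_le _ _).trans ?_) ?_
          · refine add_le_add (h4.trans h4') ?_
            rw [norm_mul, hnw]; gcongr
          · rw [norm_mul, w2]; gcongr
        · rw [norm_mul, w3]; gcongr
    _ ≤ 6 * (w * |t|) ^ 4 := by
        rw [mul_pow]
        nlinarith [mul_le_mul_of_nonneg_right p1 t4, mul_le_mul_of_nonneg_right p2 t4,
          mul_le_mul_of_nonneg_right p3 t4]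

lemma poly_exp_bound (x : ℝ) (hx : 0 ≤ x) :
    (6 * x ^ 2 + x + 6 * (x ^ 3 + x)) * Real.exp (-(x / 8)) ≤ 20000 := by
  have h := Real.sum_le_exp_of_nonneg (x := x / 8) (by positivity) 4
  simp [Finset.sum_range_succ, Nat.factorial] at h
  rw [Real.exp_neg, ← div_eq_mul_inv, div_le_iff₀ (Real.exp_pos _)]
  have := pow_nonneg hx 2
  have := pow_nonneg hx 3
  ring_nf at h ⊢
  nlinarith

lemma exp_iq (q : ℝ) : ‖Complex.exp (q * Complex.I) - (1 + q * Complex.I)‖ ≤ 3 * q ^ 2 := by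
  have hn : ‖(q : ℂ) * Complex.I‖ = |q| := by simp
  by_cases hq : |q| ≤ 1
  · have := Complex.norm_exp_sub_one_sub_id_le (x := q * Complex.I) (by rw [hn]; exact hq)
    rw [hn, sq_abs] at this
    rw [← sub_sub]
    nlinarith [sq_nonneg q]
  · push Not at hq
    have h1 : ‖Complex.exp (q * Complex.I)‖ = 1 := Complex.norm_exp_ofReal_mul_I q
    calc _ ≤ ‖Complex.exp (q * Complex.I)‖ + ‖(1 : ℂ) + q * Complex.I‖ := norm_sub_le _ _
      _ ≤ 1 + (1 + |q|) := by
        rw [h1]; gcongr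
        refine (norm_add_le _ _).trans ?_
        rw [hn]; simp
      _ ≤ _ := by rw [← sq_abs q]; nlinarith

lemma central_abs (A : ℝ) (t q : ℝ) (R : ℂ) (hR : ‖R‖ ≤ A * t ^ 2 / 4) :
    ‖Complex.exp (-(A * t ^ 2 / 2 : ℝ) + q * Complex.I + R)
      - Complex.exp (-(A * t ^ 2 / 2 : ℝ)) * (1 + q * Complex.I)‖
      ≤ (‖R‖ + 3 * q ^ 2) * Real.exp (-(A * t ^ 2 / 4)) := by
  have h1 : ‖Complex.exp (q * Complex.I)‖ = 1 := Complex.norm_exp_ofReal_mul_I q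
  have hR1 : ‖Complex.exp R - 1‖ ≤ ‖R‖ * Real.exp ‖R‖ := by
    simpa using Complex.norm_exp_sub_sum_le_norm_mul_exp R 1
  have key : Complex.exp (-(A * t ^ 2 / 2 : ℝ) + q * Complex.I + R)
      - Complex.exp (-(A * t ^ 2 / 2 : ℝ)) * (1 + q * Complex.I)
      = Complex.exp (-(A * t ^ 2 / 2 : ℝ)) * (Complex.exp (q * Complex.I) * (Complex.exp R - 1)
        + (Complex.exp (q * Complex.I) - (1 + q * Complex.I))) := by
    rw [Complex.exp_add, Complex.exp_add]; ring
  have hn : ‖Complex.exp (-(A * t ^ 2 / 2 : ℝ))‖ = Real.exp (-(A * t ^ 2 / 2)) := by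
    rw [← Complex.ofReal_neg, Complex.norm_exp_ofReal]
  rw [key, norm_mul, hn]
  have e1 : Real.exp (-(A * t ^ 2 / 2)) = Real.exp (-(A * t ^ 2 / 4)) * Real.exp (-(A * t ^ 2 / 4)) := by
    rw [← Real.exp_add]; congr 1; ring
  have e2 : 1 ≤ Real.exp (A * t ^ 2 / 4) := Real.one_le_exp (le_trans (norm_nonneg _) hR)
  have e3 : Real.exp (-(A * t ^ 2 / 4)) * Real.exp (A * t ^ 2 / 4) = 1 := by
    rw [← Real.exp_add]; simp
  have hs : ‖Complex.exp (q * Complex.I) * (Complex.exp R - 1)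
        + (Complex.exp (q * Complex.I) - (1 + q * Complex.I))‖
        ≤ (‖R‖ + 3 * q ^ 2) * Real.exp (A * t ^ 2 / 4) := by
    refine (norm_add_le _ _).trans ?_
    rw [norm_mul, h1, one_mul, add_mul]
    refine add_le_add (hR1.trans ?_) ((exp_iq q).trans ?_)
    · gcongr
    · exact le_mul_of_one_le_right (by positivity) e2
  calc _ ≤ Real.exp (-(A * t ^ 2 / 2)) * ((‖R‖ + 3 * q ^ 2) * Real.exp (A * t ^ 2 / 4)) := by
        gcongr
    _ = (‖R‖ + 3 * q ^ 2) * Real.exp (-(A * t ^ 2 / 4)) * (Real.exp (-(A * t ^ 2 / 4)) * Real.exp (A * t ^ 2 / 4)) := by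
        rw [e1]; ring
    _ = _ := by rw [e3, mul_one]

lemma central_q (w N t q : ℝ) (hw : 1 ≤ w) (hN : w * Real.exp w = N)
    (hq : q = -(Real.exp w * (w / 6 + w ^ 2 / 2 + w ^ 3 / 6)) * t ^ 3 - w * t) :
    q ^ 2 ≤ 2 * (N ^ 2 * w ^ 4 * t ^ 6) + 2 * (w ^ 2 * t ^ 2) := by
  have hew := Real.exp_pos w
  have hc : Real.exp w * (w / 6 + w ^ 2 / 2 + w ^ 3 / 6) ≤ N * w ^ 2 := by
    rw [← hN]
    have p1 : w ≤ w ^ 3 := by simpa using pow_le_pow_right₀ hw (show 1 ≤ 3 by norm_num)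
    have p2 : w ^ 2 ≤ w ^ 3 := pow_le_pow_right₀ hw (by norm_num)
    have p0 : 0 ≤ w ^ 3 := by positivity
    have := mul_le_mul_of_nonneg_left
      (show w / 6 + w ^ 2 / 2 + w ^ 3 / 6 ≤ w ^ 3 by linarith) hew.le
    refine this.trans (le_of_eq (by ring))
  · set c := Real.exp w * (w / 6 + w ^ 2 / 2 + w ^ 3 / 6) with hcdef
    have hc0 : 0 ≤ c := by positivity
    have hc2 : c ^ 2 * t ^ 6 ≤ (N * w ^ 2) ^ 2 * t ^ 6 := by gcongr
    have : q ^ 2 ≤ 2 * (c ^ 2 * t ^ 6) + 2 * (w ^ 2 * t ^ 2) := by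
      have e : 2 * (c ^ 2 * t ^ 6) + 2 * (w ^ 2 * t ^ 2) - q ^ 2 = (c * t ^ 3 - w * t) ^ 2 := by
        rw [hq]; ring
      linarith [sq_nonneg (c * t ^ 3 - w * t)]
    have e2 : (N * w ^ 2) ^ 2 * t ^ 6 = N ^ 2 * w ^ 4 * t ^ 6 := by ring
    linarith

lemma central_real (w N t A q r : ℝ) (hw : 1 ≤ w) (hN10 : 10 ≤ N)
    (hA : A = N * (w + 1)) (hRb : r ≤ 6 * (N * w ^ 3 * t ^ 4) + w * t ^ 2)
    (hq2 : q ^ 2 ≤ 2 * (N ^ 2 * w ^ 4 * t ^ 6) + 2 * (w ^ 2 * t ^ 2)) :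
    (r + 3 * q ^ 2) * Real.exp (-(A * t ^ 2 / 4)) ≤
      20000 * (w / N) * Real.exp (-(A * t ^ 2 / 8)) := by
  have t2 := sq_nonneg t
  have hN0 : 0 < N := by linarith
  set x := A * t ^ 2 with hx
  have hA0 : 0 ≤ A := by rw [hA]; positivity
  have hx0 : 0 ≤ x := by positivity
  have wN : w / N * x = w * (w + 1) * t ^ 2 := by rw [hx, hA]; field_simp
  have wN2 : w / N * x ^ 2 = w * N * (w + 1) ^ 2 * t ^ 4 := by rw [hx, hA]; field_simp
  have wN3 : w / N * x ^ 3 = w * N ^ 2 * (w + 1) ^ 3 * t ^ 6 := by rw [hx, hA]; field_simp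
  have i1 : w * t ^ 2 ≤ w / N * x := by rw [wN]; nlinarith [mul_nonneg (by positivity : 0 ≤ w ^ 2) t2]
  have i1' : w ^ 2 * t ^ 2 ≤ w / N * x := by
    rw [wN]; nlinarith [mul_nonneg (by positivity : 0 ≤ w) t2]
  have i2 : N * w ^ 3 * t ^ 4 ≤ w / N * x ^ 2 := by
    rw [wN2]
    have : N * w ^ 3 * t ^ 4 = w * N * w ^ 2 * t ^ 4 := by ring
    rw [this]
    gcongr
    linarith
  have i3 : N ^ 2 * w ^ 4 * t ^ 6 ≤ w / N * x ^ 3 := by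
    rw [wN3]
    have : N ^ 2 * w ^ 4 * t ^ 6 = w * N ^ 2 * w ^ 3 * t ^ 6 := by ring
    rw [this]
    gcongr
    linarith
  have e1 : Real.exp (-(x / 4)) = Real.exp (-(x / 8)) * Real.exp (-(x / 8)) := by
    rw [← Real.exp_add]; congr 1; ring
  have hpoly := poly_exp_bound x hx0
  have hsum : r + 3 * q ^ 2 ≤ w / N * (6 * x ^ 2 + x + 6 * (x ^ 3 + x)) := by
    have : w / N * (6 * x ^ 2 + x + 6 * (x ^ 3 + x)) = 6 * (w / N * x ^ 2) + w / N * x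
      + 6 * (w / N * x ^ 3) + 6 * (w / N * x) := by ring
    rw [this]
    linarith
  calc (r + 3 * q ^ 2) * Real.exp (-(x / 4))
      ≤ w / N * (6 * x ^ 2 + x + 6 * (x ^ 3 + x)) * Real.exp (-(x / 4)) := by gcongr
    _ = w / N * ((6 * x ^ 2 + x + 6 * (x ^ 3 + x)) * Real.exp (-(x / 8))) * Real.exp (-(x / 8)) := by
        rw [e1]; ring
    _ ≤ w / N * 20000 * Real.exp (-(x / 8)) := by gcongr
    _ = _ := by ring

lemma central (w N t A q : ℝ) (E : ℂ) (hw : 1 ≤ w) (hN : w * Real.exp w = N) (hN10 : 10 ≤ N)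
    (ht : w * |t| ≤ 1 / 10) (hE : E = Complex.exp (t * Complex.I) - 1) (hA : A = N * (w + 1))
    (hq : q = -(Real.exp w * (w / 6 + w ^ 2 / 2 + w ^ 3 / 6)) * t ^ 3 - w * t) :
    ‖Complex.exp (Real.exp w * (Complex.exp (w * E) - 1) - w * E - N * t * Complex.I)
      - Complex.exp (-(A * t ^ 2 / 2 : ℝ)) * (1 + q * Complex.I)‖
      ≤ 20000 * (w / N) * Real.exp (-(A * t ^ 2 / 8)) := by
  have h0 := abs_nonneg t
  have ht1 : |t| ≤ 1 := by nlinarith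
  have h4 := taylor4 w t hw (by linarith) E hE
  obtain ⟨b1, b2, b3, b4⟩ := E_bounds t ht1 E hE
  set P : ℂ := w * t * Complex.I - (w + w ^ 2) * t ^ 2 / 2
      - (w / 6 + w ^ 2 / 2 + w ^ 3 / 6) * t ^ 3 * Complex.I with hP
  set R0 : ℂ := Complex.exp (w * E) - 1 - P with hR0
  set R : ℂ := Real.exp w * R0 - w * (E - t * Complex.I) with hR
  have hNc : (w : ℂ) * (Real.exp w : ℂ) = N := by exact_mod_cast hN
  have hexp : Real.exp w * (Complex.exp (w * E) - 1) - w * E - N * t * Complex.I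
      = -(A * t ^ 2 / 2 : ℝ) + q * Complex.I + R := by
    rw [hR, hR0, hq, hA, hP]
    push_cast
    rw [← Complex.ofReal_exp, ← hNc]
    ring
  have hew := Real.exp_pos w
  have habs2 := sq_abs t
  have ht4 : |t| ^ 4 = t ^ 4 := by
    rw [show |t| ^ 4 = (|t| ^ 2) ^ 2 by ring, habs2]; ring
  have hRb : ‖R‖ ≤ 6 * (N * w ^ 3 * t ^ 4) + w * t ^ 2 := by
    have : ‖R‖ ≤ Real.exp w * (6 * (w * |t|) ^ 4) + w * |t| ^ 2 := by
      refine (norm_sub_le _ _).trans ?_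
      rw [norm_mul, norm_mul]
      have n1 : ‖(Real.exp w : ℂ)‖ = Real.exp w := by
        rw [Complex.norm_real, Real.norm_eq_abs, abs_of_pos hew]
      have n2 : ‖(w : ℂ)‖ = w := by
        rw [Complex.norm_real, Real.norm_eq_abs, abs_of_pos (by linarith)]
      rw [n1, n2]
      gcongr
    refine this.trans (le_of_eq ?_)
    rw [mul_pow, ht4, habs2, ← hN]; ring
  have hwt : w ^ 2 * t ^ 2 ≤ 1 / 100 := by
    have : (w * |t|) ^ 2 ≤ (1 / 10) ^ 2 := by gcongr
    rw [mul_pow, habs2] at this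
    linarith
  have t2 := sq_nonneg t
  have hN0 : 0 < N := by linarith
  have hR4 : ‖R‖ ≤ A * t ^ 2 / 4 := by
    refine hRb.trans ?_
    have : N * w ^ 3 * t ^ 4 ≤ N * w * t ^ 2 * (1 / 100) := by
      have := mul_le_mul_of_nonneg_left hwt (by positivity : 0 ≤ N * w * t ^ 2)
      nlinarith
    have h2 : w * t ^ 2 ≤ N * w * t ^ 2 / 10 := by
      have := mul_le_mul_of_nonneg_right hN10 (by positivity : 0 ≤ w * t ^ 2)
      nlinarith
    have h3 : 0 ≤ N * t ^ 2 := by positivity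
    have h4 : 0 ≤ N * w * t ^ 2 := by positivity
    rw [hA]
    nlinarith
  rw [hexp]
  refine (central_abs A t q R hR4).trans ?_
  exact central_real w N t A q _ hw hN10 hA hRb (central_q w N t q hw hN hq)

/-- Normalised integrand. -/
noncomputable def Hf (w N t : ℝ) : ℂ :=
  Complex.exp (Real.exp w * (Complex.exp (w * (Complex.exp (t * Complex.I) - 1)) - 1)
    - w * (Complex.exp (t * Complex.I) - 1) - N * t * Complex.I)

lemma Hf_cont (w N : ℝ) : Continuous (Hf w N) := by
  unfold Hf
  fun_prop

lemma Hf_tail (w N t : ℝ) (hw : 1 ≤ w) (htp : |t| ≤ Real.pi) (ht : 1 / 10 ≤ w * |t|) :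
    ‖Hf w N t‖ ≤ Real.exp (2 * w - Real.exp w / (1000 * w)) := by
  unfold Hf
  rw [Complex.norm_exp]
  apply Real.exp_le_exp.2
  have hw0 : 0 < w := by linarith
  set E := Complex.exp (t * Complex.I) - 1 with hE
  have hEre : E.re = Real.cos t - 1 := by
    rw [hE, Complex.sub_re, Complex.exp_ofReal_mul_I_re, Complex.one_re]
  have hre : (Real.exp w * (Complex.exp (w * E) - 1) - w * E - N * t * Complex.I).re
      = Real.exp w * ((Complex.exp (w * E)).re - 1) - w * (Real.cos t - 1) := by
    have h3 : (N * t * Complex.I : ℂ).re = 0 := by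
      rw [← Complex.ofReal_mul, Complex.re_ofReal_mul]; simp
    rw [Complex.sub_re, h3, Complex.sub_re, Complex.re_ofReal_mul, Complex.re_ofReal_mul, hEre,
      Complex.sub_re, Complex.one_re]
    ring
  rw [hre]
  have h1 : (Complex.exp (w * E)).re ≤ Real.exp (w * (Real.cos t - 1)) := by
    refine (Complex.re_le_norm _).trans ?_
    rw [Complex.norm_exp, Complex.re_ofReal_mul, hEre]
  have hcos := Real.cos_le_one_sub_mul_cos_sq htp
  set y := 1 / (500 * w) with hy
  have hy0 : 0 < y := by positivity
  have hy1 : y ≤ 1 := by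
    rw [hy, div_le_one (by positivity)]; linarith
  have h2 : w * (Real.cos t - 1) ≤ -y := by
    have hp : Real.pi ^ 2 ≤ 10 := by
      nlinarith [Real.pi_lt_d2, Real.pi_pos]
    have hp2 : (1 : ℝ) / 5 ≤ 2 / Real.pi ^ 2 := by
      rw [div_le_div_iff₀ (by norm_num) (by positivity)]; linarith
    have hsq : 1 / 100 ≤ w ^ 2 * t ^ 2 := by
      have : (1 / 10) ^ 2 ≤ (w * |t|) ^ 2 := by gcongr
      rw [mul_pow, sq_abs] at this
      linarith
    have ha : 1 / 5 * t ^ 2 ≤ 2 / Real.pi ^ 2 * t ^ 2 := by gcongr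
    have hb : y ≤ w * (1 / 5 * t ^ 2) := by
      rw [hy, div_le_iff₀ (by positivity)]
      nlinarith
    have hc : w * (Real.cos t - 1) ≤ w * (-(1 / 5 * t ^ 2)) := by
      gcongr; linarith
    linarith
  have h3 : Real.exp (-y) ≤ 1 - y / 2 := by
    rw [Real.exp_neg, inv_le_iff_one_le_mul₀ (Real.exp_pos _)]
    have := Real.add_one_le_exp y
    nlinarith
  have h4 : (Complex.exp (w * E)).re - 1 ≤ - (y / 2) := by
    have := Real.exp_le_exp.2 h2
    linarith
  have h5 := mul_le_mul_of_nonneg_left h4 (Real.exp_pos w).le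
  have h6 : Real.exp w * -(y / 2) = - (Real.exp w / (1000 * w)) := by
    rw [hy]; field_simp; norm_num
  have h7 : w * (-2) ≤ w * (Real.cos t - 1) := by
    gcongr; linarith [Real.neg_one_le_cos t]
  linarith

lemma gauss_part (A δ : ℝ) (hA : 0 < A) (hδ : 0 < δ) :
    |(∫ t in (-δ)..δ, Real.exp (-(A * t ^ 2 / 2))) - √(2 * Real.pi / A)|
      ≤ Real.exp (-(3 * A * δ ^ 2 / 8)) * √(8 * Real.pi / A) := by
  have e2 : (fun t : ℝ => Real.exp (-(A * t ^ 2 / 2))) = fun t => Real.exp (-(A / 2) * t ^ 2) := by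
    funext t; congr 1; ring
  have i2 : MeasureTheory.Integrable (fun t : ℝ => Real.exp (-(A * t ^ 2 / 2))) := by
    rw [e2]; exact integrable_exp_neg_mul_sq (by positivity)
  have g2 : ∫ t : ℝ, Real.exp (-(A * t ^ 2 / 2)) = √(2 * Real.pi / A) := by
    rw [e2, integral_gaussian]; congr 1; field_simp
  have e8 : (fun t : ℝ => Real.exp (-(A * t ^ 2 / 8))) = fun t => Real.exp (-(A / 8) * t ^ 2) := by
    funext t; congr 1; ring
  have i8 : MeasureTheory.Integrable (fun t : ℝ => Real.exp (-(A * t ^ 2 / 8))) := by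
    rw [e8]; exact integrable_exp_neg_mul_sq (by positivity)
  have g8 : ∫ t : ℝ, Real.exp (-(A * t ^ 2 / 8)) = √(8 * Real.pi / A) := by
    rw [e8, integral_gaussian]; congr 1; field_simp
  rw [intervalIntegral.integral_of_le (by linarith)]
  have hsplit := MeasureTheory.integral_add_compl (s := Set.Ioc (-δ) δ) measurableSet_Ioc i2
  rw [g2] at hsplit
  have hc : ∫ t in (Set.Ioc (-δ) δ)ᶜ, Real.exp (-(A * t ^ 2 / 2))
      ≤ Real.exp (-(3 * A * δ ^ 2 / 8)) * √(8 * Real.pi / A) := by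
    rw [← g8, ← MeasureTheory.integral_const_mul]
    refine le_trans (MeasureTheory.setIntegral_mono_on i2.integrableOn
      (i8.const_mul (Real.exp (-(3 * A * δ ^ 2 / 8)))).integrableOn measurableSet_Ioc.compl ?_)
      (MeasureTheory.setIntegral_le_integral (i8.const_mul _)
        (Filter.Eventually.of_forall fun t => by positivity))
    intro t ht
    rw [← Real.exp_add]
    apply Real.exp_le_exp.2
    have : δ ^ 2 ≤ t ^ 2 := by
      rw [Set.mem_compl_iff, Set.mem_Ioc, not_and_or, not_lt, not_le] at ht
      rcases ht with ht | ht <;> nlinarith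
    nlinarith
  have hc0 : 0 ≤ ∫ t in (Set.Ioc (-δ) δ)ᶜ, Real.exp (-(A * t ^ 2 / 2)) :=
    MeasureTheory.integral_nonneg fun t => (Real.exp_pos _).le
  rw [abs_le]
  constructor <;> linarith

lemma odd_part (A c w δ : ℝ) :
    ∫ t in (-δ)..δ, Real.exp (-(A * t ^ 2 / 2)) * (c * t ^ 3 - w * t) = 0 := by
  have h := intervalIntegral.integral_comp_neg (a := -δ) (b := δ)
    (fun t : ℝ => Real.exp (-(A * t ^ 2 / 2)) * (c * t ^ 3 - w * t))
  rw [neg_neg] at h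
  have h2 : (fun t : ℝ => Real.exp (-(A * (-t) ^ 2 / 2)) * (c * (-t) ^ 3 - w * (-t)))
    = fun t => -(Real.exp (-(A * t ^ 2 / 2)) * (c * t ^ 3 - w * t)) := by
    funext t
    rw [neg_sq]; ring
  rw [h2, intervalIntegral.integral_neg] at h
  linarith

lemma main_integral (w N A δ : ℝ) (hw : 1 ≤ w) (hN : w * Real.exp w = N) (hN10 : 10 ≤ N)
    (hA : A = N * (w + 1)) (hδ : δ = 1 / (10 * w)) :
    ‖(∫ t in (-Real.pi)..Real.pi, Hf w N t) - (√(2 * Real.pi / A) : ℝ)‖ ≤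
      (20000 * (w / N) + Real.exp (-(3 * A * δ ^ 2 / 8))) * √(8 * Real.pi / A)
        + 2 * Real.pi * Real.exp (2 * w - Real.exp w / (1000 * w)) := by
  have hw0 : 0 < w := by linarith
  have hN0 : 0 < N := by linarith
  have hA0 : 0 < A := by rw [hA]; positivity
  have hδ0 : 0 < δ := by rw [hδ]; positivity
  have hδ1 : w * δ = 1 / 10 := by rw [hδ]; field_simp
  have hδp : δ ≤ Real.pi := by nlinarith [Real.pi_gt_three]
  have hint : ∀ a b : ℝ, IntervalIntegrable (Hf w N) MeasureTheory.volume a b :=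
    fun a b => (Hf_cont w N).intervalIntegrable a b
  have hs : ∫ t in (-Real.pi)..Real.pi, Hf w N t = (∫ t in (-Real.pi)..(-δ), Hf w N t)
      + (∫ t in (-δ)..δ, Hf w N t) + ∫ t in δ..Real.pi, Hf w N t := by
    rw [intervalIntegral.integral_add_adjacent_intervals (hint _ _) (hint _ _),
      intervalIntegral.integral_add_adjacent_intervals (hint _ _) (hint _ _)]
  set T := Real.exp (2 * w - Real.exp w / (1000 * w)) with hT
  have hT0 : 0 < T := Real.exp_pos _
  have t1 : ‖∫ t in (-Real.pi)..(-δ), Hf w N t‖ ≤ Real.pi * T := by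
    have := intervalIntegral.norm_integral_le_of_norm_le_const (a := -Real.pi) (b := -δ)
      (f := Hf w N) (C := T) ?_
    · refine this.trans ?_
      rw [abs_of_nonneg (by linarith)]
      nlinarith
    · intro t ht
      rw [Set.uIoc_of_le (by linarith)] at ht
      have h1 : |t| = -t := abs_of_nonpos (by linarith [ht.2])
      apply Hf_tail w N t hw
      · rw [h1]; linarith [ht.1]
      · rw [h1, ← hδ1]; gcongr; linarith [ht.2]
  have t2 : ‖∫ t in δ..Real.pi, Hf w N t‖ ≤ Real.pi * T := by
    have := intervalIntegral.norm_integral_le_of_norm_le_const (a := δ) (b := Real.pi)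
      (f := Hf w N) (C := T) ?_
    · refine this.trans ?_
      rw [abs_of_nonneg (by linarith)]
      nlinarith
    · intro t ht
      rw [Set.uIoc_of_le (by linarith)] at ht
      have h1 : |t| = t := abs_of_nonneg (by linarith [ht.1])
      apply Hf_tail w N t hw
      · rw [h1]; linarith [ht.2]
      · rw [h1, ← hδ1]; gcongr; linarith [ht.1]
  set c := -(Real.exp w * (w / 6 + w ^ 2 / 2 + w ^ 3 / 6)) with hc
  set M : ℝ → ℂ := fun t => Complex.exp (-(A * t ^ 2 / 2 : ℝ)) * (1 + (c * t ^ 3 - w * t : ℝ) * Complex.I)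
    with hM
  have hMc : Continuous M := by rw [hM]; fun_prop
  have hMi : ∫ t in (-δ)..δ, M t = ((∫ t in (-δ)..δ, Real.exp (-(A * t ^ 2 / 2)) : ℝ) : ℂ) := by
    have e : M = fun t => ((Real.exp (-(A * t ^ 2 / 2)) : ℝ) : ℂ)
        + ((Real.exp (-(A * t ^ 2 / 2)) * (c * t ^ 3 - w * t) : ℝ) : ℂ) * Complex.I := by
      funext t
      rw [hM]
      push_cast
      ring
    rw [e, intervalIntegral.integral_add
      (Continuous.intervalIntegrable (by fun_prop) _ _)
      (Continuous.intervalIntegrable (by fun_prop) _ _),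
      intervalIntegral.integral_mul_const, intervalIntegral.integral_ofReal,
      intervalIntegral.integral_ofReal, odd_part]
    simp
  have e8 : (fun t : ℝ => Real.exp (-(A * t ^ 2 / 8))) = fun t => Real.exp (-(A / 8) * t ^ 2) := by
    funext t; congr 1; ring
  have i8 : MeasureTheory.Integrable (fun t : ℝ => Real.exp (-(A * t ^ 2 / 8))) := by
    rw [e8]; exact integrable_exp_neg_mul_sq (by positivity)
  have g8 : ∫ t : ℝ, Real.exp (-(A * t ^ 2 / 8)) = √(8 * Real.pi / A) := by
    rw [e8, integral_gaussian]; congr 1; field_simp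
  have hcen : ‖(∫ t in (-δ)..δ, Hf w N t) - ∫ t in (-δ)..δ, M t‖
      ≤ 20000 * (w / N) * √(8 * Real.pi / A) := by
    rw [← intervalIntegral.integral_sub (hint _ _) (hMc.intervalIntegrable _ _)]
    have hb : ∀ t ∈ Set.Ioc (-δ) δ, ‖Hf w N t - M t‖ ≤
        20000 * (w / N) * Real.exp (-(A * t ^ 2 / 8)) := by
      intro t ht
      refine central w N t A (c * t ^ 3 - w * t) _ hw hN hN10 ?_ rfl hA rfl
      rw [← hδ1]
      gcongr
      exact abs_le.2 ⟨ht.1.le, ht.2⟩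
    refine (intervalIntegral.norm_integral_le_of_norm_le (by linarith)
      (Filter.Eventually.of_forall hb)
      ((i8.const_mul (20000 * (w / N))).intervalIntegrable)).trans ?_
    rw [intervalIntegral.integral_of_le (by linarith)]
    refine (MeasureTheory.setIntegral_le_integral (i8.const_mul _)
        (Filter.Eventually.of_forall fun t => by positivity)).trans ?_
    rw [MeasureTheory.integral_const_mul, g8]
  have hg := gauss_part A δ hA0 hδ0
  have hg' : ‖(∫ t in (-δ)..δ, M t) - (√(2 * Real.pi / A) : ℝ)‖
      ≤ Real.exp (-(3 * A * δ ^ 2 / 8)) * √(8 * Real.pi / A) := by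
    rw [hMi, ← Complex.ofReal_sub, Complex.norm_real]
    exact hg
  have hfin : (∫ t in (-Real.pi)..Real.pi, Hf w N t) - (√(2 * Real.pi / A) : ℝ)
      = (∫ t in (-Real.pi)..(-δ), Hf w N t) + (∫ t in δ..Real.pi, Hf w N t)
        + (((∫ t in (-δ)..δ, Hf w N t) - ∫ t in (-δ)..δ, M t)
        + ((∫ t in (-δ)..δ, M t) - (√(2 * Real.pi / A) : ℝ))) := by
    rw [hs]; ring
  rw [hfin]
  have n1 := norm_add_le (∫ t in (-Real.pi)..(-δ), Hf w N t) (∫ t in δ..Real.pi, Hf w N t)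
  have n2 := norm_add_le ((∫ t in (-δ)..δ, Hf w N t) - ∫ t in (-δ)..δ, M t)
    ((∫ t in (-δ)..δ, M t) - (√(2 * Real.pi / A) : ℝ))
  refine (norm_add_le _ _).trans ?_
  rw [add_mul]
  linarith

lemma stirling_bound (n : ℕ) (hn : n ≠ 0) :
    |Stirling.stirlingSeq n / √Real.pi - 1| ≤ 1 / n := by
  have hpi : 0 < √Real.pi := by have := Real.pi_pos; positivity
  have hlow := Stirling.sqrt_pi_le_stirlingSeq hn
  have hmono : Monotone fun m : ℕ => Real.log (Stirling.stirlingSeq (m + 1)) - 1 / (12 * (m + 1 : ℝ)) := by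
    refine monotone_nat_of_le_succ fun m => ?_
    have h := Stirling.log_stirlingSeq_sdiff_le (m + 1)
    have e : (1 : ℝ) / (12 * (m + 1)) - 1 / (12 * (m + 1 + 1)) = 1 / (12 * (m + 1) * (m + 1 + 1)) := by
      field_simp; ring
    push_cast at h ⊢
    linarith
  have hlim : Filter.Tendsto
      (fun m : ℕ => Real.log (Stirling.stirlingSeq (m + 1)) - 1 / (12 * (m + 1 : ℝ)))
      Filter.atTop (nhds (Real.log √Real.pi - 0)) := by
    refine Filter.Tendsto.sub ?_ ?_
    · exact ((Stirling.tendsto_stirlingSeq_sqrt_pi.comp (Filter.tendsto_add_atTop_nat 1)).log hpi.ne')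
    · have h := (tendsto_one_div_add_atTop_nhds_zero_nat (𝕜 := ℝ)).const_mul (1 / 12 : ℝ)
      rw [mul_zero] at h
      refine h.congr fun m => ?_
      field_simp
  have hup := hmono.ge_of_tendsto hlim (n - 1)
  have hn1 : n - 1 + 1 = n := by omega
  have hn1' : ((n - 1 : ℕ) : ℝ) + 1 = n := by exact_mod_cast hn1
  simp only [hn1, hn1', sub_zero] at hup
  have hpos : 0 < Stirling.stirlingSeq n := lt_of_lt_of_le hpi hlow
  have hnR : (1 : ℝ) ≤ n := by exact_mod_cast Nat.one_le_iff_ne_zero.2 hn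
  have hle : Stirling.stirlingSeq n / √Real.pi ≤ Real.exp (1 / (12 * n)) := by
    rw [← Real.log_le_iff_le_exp (by positivity), Real.log_div hpos.ne' hpi.ne']
    linarith
  have hge : 1 ≤ Stirling.stirlingSeq n / √Real.pi := by
    rwa [le_div_iff₀ hpi, one_mul]
  set y : ℝ := 1 / (12 * n) with hy
  have hy0 : 0 < y := by positivity
  have hy1 : y ≤ 1 / 12 := by
    rw [hy, div_le_div_iff₀ (by positivity) (by norm_num)]; linarith
  have hexp : Real.exp y ≤ 1 + 2 * y := by
    have h := Real.add_one_le_exp (-y)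
    rw [Real.exp_neg] at h
    have hp := Real.exp_pos y
    have : (-y + 1) * Real.exp y ≤ 1 := by
      calc _ ≤ (Real.exp y)⁻¹ * Real.exp y := by gcongr
        _ = 1 := inv_mul_cancel₀ hp.ne'
    nlinarith
  have hyn : 12 * y = 1 / n := by rw [hy]; field_simp
  rw [abs_of_nonneg (by linarith), ← hyn]
  linarith

lemma gI_eq (n : ℕ) (w t : ℝ) :
    gI n w t = (Real.exp (Real.exp w - 1 - w) : ℝ) * Hf w n t := by
  unfold gI Hf Fg
  rw [Complex.ofReal_exp, ← Complex.exp_add, ← Complex.exp_add]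
  congr 1
  have : Complex.exp (w * (Complex.exp (t * Complex.I) - 1)) =
      Complex.exp (w * Complex.exp (t * Complex.I)) * (Complex.exp w)⁻¹ := by
    rw [← Complex.exp_neg, ← Complex.exp_add]; congr 1; ring
  rw [this]
  push_cast
  have h0 := Complex.exp_ne_zero (w : ℂ)
  field_simp
  ring

lemma small_bounds (w N A δ : ℝ) (hw : 50000 ≤ w) (hN : w * Real.exp w = N)
    (hA : A = N * (w + 1)) (hδ : δ = 1 / (10 * w)) :
    Real.exp (-(3 * A * δ ^ 2 / 8)) ≤ w / N ∧
    A * (2 * Real.pi * Real.exp (2 * w - Real.exp w / (1000 * w))) ≤ w / N := by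
  have hw0 : 0 < w := by linarith
  have he := Real.exp_pos w
  have hwN : w / N = Real.exp (-w) := by
    rw [← hN, Real.exp_neg]; field_simp
  have hsum := Real.sum_le_exp_of_nonneg (x := w) hw0.le 4
  simp [Finset.sum_range_succ, Nat.factorial] at hsum
  have w2 : 0 < w ^ 2 := by positivity
  have w3 : 50000 * w ^ 2 ≤ w ^ 3 := by nlinarith
  have h7 : 8000 * w ^ 2 ≤ Real.exp w := by nlinarith
  rw [hwN]
  constructor
  · apply Real.exp_le_exp.2
    have : 3 * A * δ ^ 2 / 8 = 3 / 800 * (Real.exp w * ((w + 1) / w)) := by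
      rw [hA, hδ, ← hN]; field_simp; norm_num
    rw [this]
    have h1 : 1 ≤ (w + 1) / w := by rw [le_div_iff₀ hw0]; linarith
    have h2 : Real.exp w ≤ Real.exp w * ((w + 1) / w) := le_mul_of_one_le_right he.le h1
    nlinarith
  · have hwe : w + 1 ≤ Real.exp w := Real.add_one_le_exp w
    have hA2 : A ≤ Real.exp w * Real.exp w * Real.exp w := by
      rw [hA, ← hN]; gcongr; linarith
    have hp : 2 * Real.pi ≤ Real.exp w := by linarith [Real.pi_lt_four]
    have hy : 8 * w ≤ Real.exp w / (1000 * w) := by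
      rw [le_div_iff₀ (by positivity)]; nlinarith
    calc _ ≤ (Real.exp w * Real.exp w * Real.exp w) * (Real.exp w * Real.exp (2 * w - 8 * w)) := by
          gcongr
      _ = Real.exp (w + w + w + (w + (2 * w - 8 * w))) := by simp only [Real.exp_add]
      _ ≤ Real.exp (-w) := by apply Real.exp_le_exp.2; linarith

lemma J_bound (w N A : ℝ) (hw : 50000 ≤ w) (hN : w * Real.exp w = N)
    (hA : A = N * (w + 1)) :
    ‖(√(A / (2 * Real.pi)) : ℝ) * (∫ t in (-Real.pi)..Real.pi, Hf w N t) - 1‖ ≤ 50000 * (w / N) := by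
  have hw0 : 0 < w := by linarith
  have hew := Real.add_one_le_exp w
  have hN10 : 10 ≤ N := by nlinarith
  have hN0 : 0 < N := by linarith
  have hA0 : 0 < A := by rw [hA]; positivity
  have hA1 : 1 ≤ A := by rw [hA]; nlinarith
  have hpi := Real.pi_pos
  have h := main_integral w N A _ (by linarith) hN hN10 hA rfl
  obtain ⟨s1, s2⟩ := small_bounds w N A _ hw hN hA rfl
  set I := ∫ t in (-Real.pi)..Real.pi, Hf w N t with hI
  set r := √(A / (2 * Real.pi)) with hr
  have r0 : 0 ≤ r := Real.sqrt_nonneg _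
  have r1 : r * √(2 * Real.pi / A) = 1 := by
    rw [hr, ← Real.sqrt_mul (by positivity)]
    have : A / (2 * Real.pi) * (2 * Real.pi / A) = 1 := by field_simp
    rw [this, Real.sqrt_one]
  have r2 : r * √(8 * Real.pi / A) = 2 := by
    rw [hr, ← Real.sqrt_mul (by positivity)]
    have : A / (2 * Real.pi) * (8 * Real.pi / A) = 2 ^ 2 := by field_simp; norm_num
    rw [this, Real.sqrt_sq (by norm_num)]
  have r3 : r ≤ A := by
    rw [hr, Real.sqrt_le_left hA0.le]
    rw [div_le_iff₀ (by positivity)]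
    nlinarith [Real.pi_gt_three]
  have e : (r : ℂ) * I - 1 = r * (I - (√(2 * Real.pi / A) : ℝ)) := by
    rw [mul_sub, ← Complex.ofReal_mul, r1]; simp
  rw [e, norm_mul, Complex.norm_real, Real.norm_eq_abs, abs_of_nonneg r0]
  set T := 2 * Real.pi * Real.exp (2 * w - Real.exp w / (1000 * w)) with hT
  have hT0 : 0 ≤ T := by positivity
  have hwN : 0 < w / N := by positivity
  set X := Real.exp (-(3 * A * (1 / (10 * w)) ^ 2 / 8)) with hX
  calc r * ‖I - (√(2 * Real.pi / A) : ℝ)‖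
      ≤ r * ((20000 * (w / N) + X) * √(8 * Real.pi / A) + T) := by gcongr
    _ = (20000 * (w / N) + X) * (r * √(8 * Real.pi / A)) + r * T := by ring
    _ ≤ (20000 * (w / N) + w / N) * 2 + A * T := by rw [r2]; gcongr
    _ ≤ _ := by linarith

lemma beta_factor (n : ℕ) (w : ℝ) (hn : n ≠ 0) (hw : 0 < w) (hN : w * Real.exp w = n) :
    (((beta n : ℝ) * Real.sqrt (w + 1) * Real.exp (-((w + 1 / w - 1) * n) + w + 1) : ℝ) : ℂ)
      = (Stirling.stirlingSeq n / √Real.pi : ℝ) * ((√(n * (w + 1) / (2 * Real.pi)) : ℝ) *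
        (∫ t in (-Real.pi)..Real.pi, Hf w n t)) := by
  have hb := bq_integral n w hw
  simp only [gI_eq] at hb
  rw [intervalIntegral.integral_const_mul] at hb
  set I := ∫ t in (-Real.pi)..Real.pi, Hf w n t with hI
  have hpi := Real.pi_pos
  have hn0 : (0 : ℝ) < n := by exact_mod_cast Nat.pos_of_ne_zero hn
  have key : (n.factorial / (2 * Real.pi * w ^ n)) * Real.exp (Real.exp w - 1 - w) * Real.sqrt (w + 1)
      * Real.exp (-((w + 1 / w - 1) * n) + w + 1)
      = Stirling.stirlingSeq n / √Real.pi * √(n * (w + 1) / (2 * Real.pi)) := by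
    have hexp : Real.exp (Real.exp w - 1 - w) * Real.exp (-((w + 1 / w - 1) * n) + w + 1)
        = w ^ n * Real.exp 1 ^ n / n ^ n := by
      have h1 : (1 / w) * n = Real.exp w := by rw [← hN]; field_simp
      have h2 : (n : ℝ) ^ n = w ^ n * Real.exp (n * w) := by
        rw [Real.exp_nat_mul, ← mul_pow, hN]
      rw [h2, ← Real.exp_add, ← Real.exp_nat_mul, mul_div_mul_left _ _ (by positivity), ← Real.exp_sub]
      congr 1
      linear_combination -h1
    have hs1 : √(n * (w + 1) / (2 * Real.pi)) = √n * √(w + 1) / (√2 * √Real.pi) := by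
      rw [Real.sqrt_div (by positivity), Real.sqrt_mul hn0.le, Real.sqrt_mul (by norm_num)]
    have hs2 : √(2 * (n : ℝ)) = √2 * √n := Real.sqrt_mul (by norm_num) _
    have hp2 : √Real.pi * √Real.pi = Real.pi := Real.mul_self_sqrt hpi.le
    have h22 : √2 * √2 = (2 : ℝ) := Real.mul_self_sqrt (by norm_num)
    calc _ = (n.factorial / (2 * Real.pi * w ^ n)) * Real.sqrt (w + 1) * (Real.exp (Real.exp w - 1 - w)
      * Real.exp (-((w + 1 / w - 1) * n) + w + 1)) := by ring
      _ = n.factorial * Real.exp 1 ^ n / n ^ n * √(w + 1) / ((√2 * √2) * (√Real.pi * √Real.pi)) := by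
        rw [hexp, hp2, h22]; field_simp
      _ = _ := by
        rw [hs1, Stirling.stirlingSeq, hs2, div_pow]
        have : (0 : ℝ) < √n := Real.sqrt_pos.2 hn0
        field_simp
  have hc := congrArg (fun x : ℝ => (x : ℂ)) key
  push_cast at hc hb ⊢
  rw [beta_eq_bq, hb]
  linear_combination I * hc

/-- Saddle-point asymptotics for `beta n`: with `w = W(n)` the positive solution
of `w * e^w = n`, `beta n = e^{(w + 1/w - 1)n - w - 1}/√(w+1) * (1 + O((log n)/n))`. -/
theorem beta_asymptotic :
    ∃ C : ℝ, 0 < C ∧ ∃ N : ℕ, ∀ n : ℕ, N ≤ n → ∀ w : ℝ, 0 < w → w * Real.exp w = n →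
      |(beta n : ℝ) * Real.sqrt (w + 1) *
          Real.exp (-((w + 1 / w - 1) * n) + w + 1) - 1| ≤
        C * Real.log n / n := by
  obtain ⟨K, hK⟩ := exists_nat_gt ((50000 : ℝ) * Real.exp 50000)
  refine ⟨200000, by norm_num, K, fun n hn w hw hN => ?_⟩
  have hnK : (K : ℝ) ≤ n := by exact_mod_cast hn
  have hw5 : 50000 ≤ w := by
    by_contra hlt
    push Not at hlt
    have : w * Real.exp w ≤ 50000 * Real.exp 50000 := by gcongr
    linarith
  have hn1 : (1 : ℝ) ≤ n := by
    rw [← hN]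
    nlinarith [Real.add_one_le_exp w]
  have hn0 : (0 : ℝ) < n := by linarith
  have hnn : n ≠ 0 := by
    rintro rfl
    simp at hn0
  have hwl : w ≤ Real.log n := by
    rw [Real.le_log_iff_exp_le hn0, ← hN]
    exact le_mul_of_one_le_left (Real.exp_pos _).le (by linarith)
  have hJ := J_bound w n _ hw5 hN rfl
  have hS := stirling_bound n hnn
  have hF := beta_factor n w hnn hw hN
  set X := (beta n : ℝ) * Real.sqrt (w + 1) * Real.exp (-((w + 1 / w - 1) * n) + w + 1) with hX
  set S := Stirling.stirlingSeq n / √Real.pi with hSdef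
  set J := (√(n * (w + 1) / (2 * Real.pi)) : ℝ) * (∫ t in (-Real.pi)..Real.pi, Hf w n t) with hJdef
  have e : |X - 1| = ‖(X : ℂ) - 1‖ := by
    rw [← Complex.ofReal_one, ← Complex.ofReal_sub, Complex.norm_real, Real.norm_eq_abs]
  have e2 : (X : ℂ) - 1 = S * (J - 1) + ((S - 1 : ℝ) : ℂ) := by
    rw [hF]; push_cast; ring
  have hSn : |S| ≤ 2 := by
    have h1 : (1 : ℝ) / n ≤ 1 := by rw [div_le_one hn0]; exact hn1
    have := abs_le.1 (hS.trans h1)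
    rw [abs_le]; constructor <;> linarith
  rw [e, e2]
  have hwn : (1 : ℝ) / n ≤ w / n := by gcongr; linarith
  have hlog : w / n ≤ Real.log n / n := by gcongr
  calc _ ≤ ‖(S : ℂ) * (J - 1)‖ + ‖((S - 1 : ℝ) : ℂ)‖ := norm_add_le _ _
    _ ≤ 2 * (50000 * (w / n)) + w / n := by
      rw [norm_mul, Complex.norm_real, Complex.norm_real, Real.norm_eq_abs, Real.norm_eq_abs]
      gcongr
      exact hS.trans hwn
    _ ≤ 200000 * (Real.log n / n) := by
      have : 0 < w / n := by positivity
      linarith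
    _ = _ := by ring
end

section
/- For every fixed integer ℓ ≥ 0 there exist a constant C > 0 and an integer N such that for all n ≥ N, if w > 0 is the unique positive real with w·e^w = n, then | (β_{n−ℓ}/β_n) · (n/w)^ℓ − 1 | ≤ C·(log n)/n; in particular β_{n−ℓ}/β_n is asymptotic to (W(n)/n)^ℓ. -/
open Finset

lemma summ_aux (n : ℕ) : Summable (fun k : ℕ => ((k:ℝ)-1)^n / (k.factorial : ℝ)) := by
  have h : Summable (fun k : ℕ => (n.factorial : ℝ) * Real.exp 1 * (Real.exp 1 ^ k / (k.factorial : ℝ))) :=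
    (Real.summable_pow_div_factorial (Real.exp 1)).mul_left _
  refine Summable.of_norm_bounded h ?_
  intro k
  have h1 := Real.pow_div_factorial_le_exp |(k:ℝ)-1| (abs_nonneg _) n
  have h2 : |(k:ℝ)-1| ≤ 1 + k := by
    have : (0:ℝ) ≤ k := Nat.cast_nonneg k
    rw [abs_le]; constructor <;> linarith
  have h3 : Real.exp |(k:ℝ)-1| ≤ Real.exp 1 * Real.exp 1 ^ k := by
    rw [← Real.exp_nat_mul, ← Real.exp_add]
    apply Real.exp_le_exp.2
    linarith
  have hn : (0:ℝ) < n.factorial := by exact_mod_cast Nat.factorial_pos n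
  have hk : (0:ℝ) < k.factorial := by exact_mod_cast Nat.factorial_pos k
  rw [div_le_iff₀ hn] at h1
  rw [norm_div, norm_pow, Real.norm_eq_abs, Real.norm_eq_abs, abs_of_pos hk,
    mul_div_assoc', div_le_div_iff_of_pos_right hk]
  nlinarith

noncomputable def Tm (n : ℕ) : ℝ := ∑' k : ℕ, ((k:ℝ)-1)^n / (k.factorial : ℝ)
noncomputable def Sm (n : ℕ) : ℝ := ∑' k : ℕ, (k:ℝ)^n / ((k+1).factorial : ℝ)

lemma summ_S (n : ℕ) : Summable (fun k : ℕ => (k:ℝ)^n / ((k+1).factorial : ℝ)) := by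
  have := (summable_nat_add_iff 1).2 (summ_aux n)
  simpa using this

lemma T_eq (n : ℕ) : Tm n = Sm n + (-1)^n := by
  unfold Tm Sm
  rw [(summ_aux n).tsum_eq_zero_add]
  simp [add_comm]

lemma T_zero : Tm 0 = Real.exp 1 := by
  unfold Tm
  rw [Real.exp_eq_exp_ℝ, NormedSpace.exp_eq_tsum_div]
  simp

lemma fact_id (k : ℕ) : ((k+1).factorial : ℝ) = ((k:ℝ)+1) * k.factorial := by
  rw [Nat.factorial_succ]; push_cast; ring

lemma T_rec (n : ℕ) : Tm (n+1) + Tm n = ∑ i ∈ Finset.range (n+1), (n.choose i : ℝ) * Tm i := by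
  have h1 : ∑ i ∈ Finset.range (n+1), (n.choose i : ℝ) * Tm i = ∑' k : ℕ, (k:ℝ)^n / (k.factorial : ℝ) := by
    unfold Tm
    simp_rw [← tsum_mul_left]
    rw [← Summable.tsum_finsetSum (fun i _ => (summ_aux i).mul_left _)]
    congr 1; ext k
    have := add_pow ((k:ℝ)-1) 1 n
    rw [sub_add_cancel] at this
    rw [this, Finset.sum_div]
    apply Finset.sum_congr rfl
    intro i _
    simp; ring
  rw [h1]
  unfold Tm
  rw [← (summ_aux (n+1)).tsum_add (summ_aux n)]
  rw [((summ_aux (n+1)).add (summ_aux n)).tsum_eq_zero_add]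
  have : ((((0:ℕ):ℝ) - 1) ^ (n + 1) / ((Nat.factorial 0 : ℕ):ℝ) + (((0:ℕ):ℝ) - 1) ^ n / ((Nat.factorial 0:ℕ):ℝ)) = 0 := by
    simp [pow_succ]
  rw [this, zero_add]
  congr 1; ext k
  have hk : (0:ℝ) < k.factorial := by exact_mod_cast Nat.factorial_pos k
  have hk1 : (0:ℝ) < (k:ℝ)+1 := by positivity
  rw [fact_id]
  push_cast
  rw [add_sub_cancel_right, pow_succ]
  field_simp

/-- lower bound -/
lemma S_lower (n i : ℕ) (hn : 1 ≤ n) (w : ℝ) (h : w * Real.exp w = n + i) :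
    (Real.exp w - i - 1) * Sm n ≤ Sm (n+1) := by
  set M := Real.exp w with hM
  have hM0 : 0 < M := Real.exp_pos w
  have hS0 : 0 ≤ Sm n := tsum_nonneg (fun k => by positivity)
  have e1 : Sm (n+1) + Sm n = ∑' k : ℕ, ((k:ℝ)+1)^n / ((k+1).factorial : ℝ) := by
    have s0 : Summable (fun k : ℕ => (k:ℝ)^n / (k.factorial : ℝ)) := by
      refine ((summ_S (n+1)).add (summ_S n)).congr (fun k => ?_)
      have hk : (0:ℝ) < k.factorial := by exact_mod_cast Nat.factorial_pos k
      rw [fact_id, pow_succ]; field_simp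
    have : Sm (n+1) + Sm n = ∑' k : ℕ, (k:ℝ)^n / (k.factorial : ℝ) := by
      unfold Sm
      rw [← (summ_S (n+1)).tsum_add (summ_S n)]
      congr 1; ext k
      have hk : (0:ℝ) < k.factorial := by exact_mod_cast Nat.factorial_pos k
      rw [fact_id, pow_succ]; field_simp
    rw [this, s0.tsum_eq_zero_add]
    simp [show n ≠ 0 by omega]
  have sR : Summable (fun k : ℕ => ((k:ℝ)+1)^n / ((k+1).factorial : ℝ)) := by
    have s0 : Summable (fun k : ℕ => (k:ℝ)^n / (k.factorial : ℝ)) := by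
      refine ((summ_S (n+1)).add (summ_S n)).congr (fun k => ?_)
      have hk : (0:ℝ) < k.factorial := by exact_mod_cast Nat.factorial_pos k
      rw [fact_id, pow_succ]; field_simp
    have := (summable_nat_add_iff 1).2 s0
    simpa using this
  have e2 : (M*(1-w) + n*(2 - 1/M)) * Sm n - n/M * Sm (n+1) ≤ Sm (n+1) + Sm n := by
    rw [e1]
    unfold Sm
    rw [← tsum_mul_left, ← tsum_mul_left, ← ((summ_S n).mul_left _).tsum_sub ((summ_S (n+1)).mul_left _)]
    refine Summable.tsum_le_tsum ?_ (((summ_S n).mul_left _).sub ((summ_S (n+1)).mul_left _)) sR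
    intro k
    have hf : (0:ℝ) < (k+1).factorial := by exact_mod_cast Nat.factorial_pos _
    set x : ℝ := (k:ℝ)+1 with hx
    have hx0 : 0 < x := by positivity
    have hk : (k:ℝ) = x - 1 := by rw [hx]; ring
    have hk0 : (0:ℝ) ≤ k := Nat.cast_nonneg k
    have a1 : (k:ℝ) ≤ x * Real.exp (-(1/x)) := by
      have := Real.add_one_le_exp (-(1/x))
      calc (k:ℝ) = x * (-(1/x)+1) := by rw [hk]; field_simp; ring
        _ ≤ _ := by gcongr
    have a2 : (k:ℝ)^n * Real.exp (n/x) ≤ x^n := by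
      calc (k:ℝ)^n * Real.exp (n/x) ≤ (x * Real.exp (-(1/x)))^n * Real.exp (n/x) := by gcongr
        _ = x^n := by
          rw [mul_pow, ← Real.exp_nat_mul, mul_assoc, ← Real.exp_add]
          have : (n:ℝ) * -(1/x) + n/x = 0 := by ring
          rw [this]; simp
    have a3 : M * (1 + n/x - w) ≤ Real.exp (n/x) := by
      have := Real.add_one_le_exp (n/x - w)
      have e : Real.exp (n/x) = M * Real.exp (n/x - w) := by
        rw [hM, ← Real.exp_add]; ring_nf
      rw [e]; gcongr; linarith
    have a4 : 2 - x/M ≤ M/x := by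
      rw [← sub_nonneg]
      have : M/x - (2 - x/M) = (M-x)^2/(M*x) := by field_simp; ring
      rw [this]; positivity
    have a5 : M*(1-w) + n*(2 - x/M) ≤ Real.exp (n/x) := by
      have : (n:ℝ)*(2 - x/M) ≤ n * (M/x) := by gcongr
      have e : M * (1 + n/x - w) = M*(1-w) + n*(M/x) := by ring
      linarith
    have a6 : (k:ℝ)^n * (M*(1-w) + n*(2 - x/M)) ≤ x^n :=
      le_trans (mul_le_mul_of_nonneg_left a5 (by positivity)) a2
    have : (M*(1-w) + n*(2 - 1/M)) * ((k:ℝ)^n / ((k+1).factorial : ℝ)) - n/M * ((k:ℝ)^(n+1) / ((k+1).factorial : ℝ))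
      = (k:ℝ)^n * (M*(1-w) + n*(2 - x/M)) / ((k+1).factorial : ℝ) := by
      rw [hx, pow_succ]; field_simp; ring
    simp only [this]
    exact (div_le_div_iff_of_pos_right hf).2 a6
  have hq : 0 ≤ (n:ℝ)/M := by positivity
  have hw : w = n/M + i/M := by field_simp; linarith
  -- (1+n/M) (S(n+1)+S n) ≥ (M(1-w)+2n) S n
  have e3 : (M*(1-w) + 2*n) * Sm n ≤ (1 + n/M) * (Sm (n+1) + Sm n) := by
    have : (M*(1-w) + n*(2 - 1/M)) * Sm n = (M*(1-w) + 2*n) * Sm n - n/M * Sm n := by ring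
    rw [this] at e2; linarith
  have e4 : (1+n/M) * (M - i) ≤ M*(1-w) + 2*n := by
    have : M*(1-w) + 2*n = M + n - i := by
      have : M * w = n + i := by linarith
      linarith
    rw [this]
    have e : (1+n/M) * (M - i) = M + n - i - n/M * i := by field_simp; ring
    rw [e]
    have : 0 ≤ (n:ℝ)/M * i := by positivity
    linarith
  have e5 : (1+n/M) * ((M - i) * Sm n) ≤ (1+n/M) * (Sm (n+1) + Sm n) := by
    rw [← mul_assoc]
    exact le_trans (mul_le_mul_of_nonneg_right e4 hS0) e3
  have e6 := le_of_mul_le_mul_left e5 (by positivity)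
  linarith

lemma S_upper (n i : ℕ) (hn : 1 ≤ n) (w : ℝ) (hw0 : 0 < w) (h : w * Real.exp w = n + i) :
    Sm (n+1) ≤ (Real.exp w + 1) * Sm n := by
  set M := Real.exp w with hM
  have hM0 : 0 < M := Real.exp_pos w
  have hS0 : 0 ≤ Sm n := tsum_nonneg (fun k => by positivity)
  have sh : ∀ m, 1 ≤ m → Sm m = ∑' k : ℕ, ((k:ℝ)+1)^m / ((k+2).factorial : ℝ) := by
    intro m hm
    unfold Sm
    rw [(summ_S m).tsum_eq_zero_add]
    simp [show m ≠ 0 by omega]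
  have ss : ∀ m, Summable (fun k : ℕ => ((k:ℝ)+1)^m / ((k+2).factorial : ℝ)) := by
    intro m
    have := (summable_nat_add_iff 1).2 (summ_S m)
    simpa using this
  have key : (1+w) * Sm (n+1) - (1 + w + n) * Sm n ≤ M * Sm n := by
    have r : M * Sm n = ∑' k : ℕ, M * ((k:ℝ)^n / ((k+1).factorial : ℝ)) := by
      unfold Sm; rw [tsum_mul_left]
    rw [r, sh n hn, sh (n+1) (by omega), ← tsum_mul_left, ← tsum_mul_left,
      ← ((ss (n+1)).mul_left _).tsum_sub ((ss n).mul_left _)]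
    refine Summable.tsum_le_tsum ?_ (((ss (n+1)).mul_left _).sub ((ss n).mul_left _)) ((summ_S n).mul_left _)
    intro k
    have hf : (0:ℝ) < (k+2).factorial := by exact_mod_cast Nat.factorial_pos _
    have hf1 : (0:ℝ) < (k+1).factorial := by exact_mod_cast Nat.factorial_pos _
    have hk0 : (0:ℝ) ≤ k := Nat.cast_nonneg k
    have main : ((k:ℝ)+1)^n * (k*(1+w) - n) ≤ M * ((k+2) * (k:ℝ)^n) := by
      rcases Nat.eq_zero_or_pos k with rfl | hk
      · simp [show n ≠ 0 by omega]
      have hk' : (0:ℝ) < k := by exact_mod_cast hk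
      have a1 : (k:ℝ) + 1 ≤ k * Real.exp (1/k) := by
        have := Real.add_one_le_exp (1/(k:ℝ))
        calc (k:ℝ)+1 = k * (1/(k:ℝ)+1) := by field_simp; ring
          _ ≤ _ := by gcongr
      have a2 : ((k:ℝ)+1)^n * Real.exp (-(n/k)) ≤ (k:ℝ)^n := by
        calc ((k:ℝ)+1)^n * Real.exp (-(n/k)) ≤ (k * Real.exp (1/k))^n * Real.exp (-(n/k)) := by gcongr
          _ = (k:ℝ)^n := by
            rw [mul_pow, ← Real.exp_nat_mul, mul_assoc, ← Real.exp_add]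
            have : (n:ℝ) * (1/k) + -(n/k) = 0 := by ring
            rw [this]; simp
      have a3 : 1 + w - n/k ≤ M * Real.exp (-(n/k)) := by
        have := Real.add_one_le_exp (w - n/k)
        rw [hM, ← Real.exp_add, ← sub_eq_add_neg]; linarith
      calc ((k:ℝ)+1)^n * (k*(1+w) - n) = ((k:ℝ)+1)^n * (k * (1 + w - n/k)) := by field_simp
        _ ≤ ((k:ℝ)+1)^n * (k * (M * Real.exp (-(n/k)))) := by gcongr
        _ = M * (k * (((k:ℝ)+1)^n * Real.exp (-(n/k)))) := by ring
        _ ≤ M * ((k+2) * (k:ℝ)^n) := by gcongr; linarith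
    have f2 : ((k+2).factorial : ℝ) = ((k:ℝ)+2) * (k+1).factorial := by
      rw [Nat.factorial_succ (k+1)]; push_cast; ring
    have l : (1+w) * (((k:ℝ)+1)^(n+1) / ((k+2).factorial : ℝ)) - (1+w+n) * (((k:ℝ)+1)^n / ((k+2).factorial : ℝ))
      = ((k:ℝ)+1)^n * (k*(1+w) - n) / ((k+2).factorial : ℝ) := by
      rw [pow_succ]; field_simp; ring
    have r2 : M * ((k:ℝ)^n / ((k+1).factorial : ℝ)) = M * ((k+2) * (k:ℝ)^n) / ((k+2).factorial : ℝ) := by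
      rw [f2]; field_simp
    simp only [l, r2]
    exact (div_le_div_iff_of_pos_right hf).2 main
  have hi : (0:ℝ) ≤ i := Nat.cast_nonneg i
  have e5 : (1+w) * Sm (n+1) ≤ (1+w) * ((M+1) * Sm n) := by
    have : (n:ℝ) * Sm n ≤ (w*M) * Sm n := by
      apply mul_le_mul_of_nonneg_right _ hS0; linarith
    nlinarith
  exact le_of_mul_le_mul_left e5 (by positivity)

lemma S_big (n : ℕ) : (2:ℝ)^n / 6 ≤ Sm n := by
  have := (summ_S n).le_tsum 2 (fun k _ => by positivity)
  have e : (((2:ℕ):ℝ))^n / ((2+1).factorial : ℝ) = 2^n/6 := by norm_num [Nat.factorial]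
  rw [e] at this
  exact this

section comb
variable {α : Type*} [DecidableEq α]

noncomputable def FP (s : Finset α) : Finset (Finset (Finset α)) :=
  open Classical in
  s.powerset.powerset.filter (fun P => (∀ B ∈ P, 2 ≤ B.card) ∧ ∀ x ∈ s, ∃! B, B ∈ P ∧ x ∈ B)

lemma mem_FP (s : Finset α) (P : Finset (Finset α)) :
    P ∈ FP s ↔ (∀ B ∈ P, B ⊆ s) ∧ (∀ B ∈ P, 2 ≤ B.card) ∧ ∀ x ∈ s, ∃! B, B ∈ P ∧ x ∈ B := by
  unfold FP
  simp only [Finset.mem_filter, Finset.mem_powerset]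
  refine and_congr_left fun _ => ⟨fun h B hB => Finset.mem_powerset.1 (h hB), fun h B hB => Finset.mem_powerset.2 (h B hB)⟩

lemma FP_empty : FP (∅ : Finset α) = {∅} := by
  ext P
  rw [mem_FP, Finset.mem_singleton]
  constructor
  · rintro ⟨h1, h2, -⟩
    rw [Finset.eq_empty_iff_forall_notMem]
    intro B hB
    have := h1 B hB
    have h := h2 B hB
    rw [Finset.subset_empty.1 this] at h
    simp at h
  · rintro rfl; simp

lemma FP_insert (s : Finset α) (a : α) (ha : a ∉ s) :
    FP (insert a s) = (s.powerset.erase ∅).biUnion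
      (fun t => (FP (s \ t)).image (fun P => insert (insert a t) P)) := by
  ext P
  simp only [Finset.mem_biUnion, Finset.mem_image, Finset.mem_erase, Finset.mem_powerset, mem_FP]
  constructor
  · rintro ⟨h1, h2, h3⟩
    obtain ⟨B, ⟨hB, haB⟩, hu⟩ := h3 a (Finset.mem_insert_self a s)
    have hins : insert a (B.erase a) = B := Finset.insert_erase haB
    refine ⟨B.erase a, ⟨?_, ?_⟩, P.erase B, ⟨?_, ?_, ?_⟩, ?_⟩
    · intro h
      have := h2 B hB
      rw [← hins, h] at this
      simp at this
    · intro x hx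
      have := h1 B hB (Finset.mem_of_mem_erase hx)
      exact (Finset.mem_insert.1 this).resolve_left (Finset.ne_of_mem_erase hx)
    · intro D hD x hx
      have hDP := Finset.mem_of_mem_erase hD
      have hDB := Finset.ne_of_mem_erase hD
      have hxs := h1 D hDP hx
      have hxa : x ≠ a := by
        rintro rfl
        exact hDB (hu D ⟨hDP, hx⟩)
      refine Finset.mem_sdiff.2 ⟨(Finset.mem_insert.1 hxs).resolve_left hxa, ?_⟩
      intro hxB
      exact hDB ((h3 x hxs).unique ⟨hDP, hx⟩ ⟨hB, Finset.mem_of_mem_erase hxB⟩)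
    · intro D hD
      exact h2 D (Finset.mem_of_mem_erase hD)
    · intro x hx
      obtain ⟨hxs, hxB⟩ := Finset.mem_sdiff.1 hx
      have hxa : x ≠ a := by rintro rfl; exact ha hxs
      obtain ⟨D, ⟨hD, hxD⟩, huD⟩ := h3 x (Finset.mem_insert_of_mem hxs)
      refine ⟨D, ⟨Finset.mem_erase.2 ⟨?_, hD⟩, hxD⟩, ?_⟩
      · rintro rfl
        exact hxB (Finset.mem_erase.2 ⟨hxa, hxD⟩)
      · rintro E ⟨hE, hxE⟩
        exact huD E ⟨Finset.mem_of_mem_erase hE, hxE⟩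
    · show insert (insert a (B.erase a)) (P.erase B) = P
      rw [hins, Finset.insert_erase hB]
  · rintro ⟨t, ⟨ht0, hts⟩, Q, ⟨h1, h2, h3⟩, rfl⟩
    have hat : a ∉ t := fun h => ha (hts h)
    refine ⟨?_, ?_, ?_⟩
    · intro B hB
      rcases Finset.mem_insert.1 hB with rfl | hB
      · exact Finset.insert_subset_insert a hts
      · exact (h1 B hB).trans (Finset.sdiff_subset.trans (Finset.subset_insert a s))
    · intro B hB
      rcases Finset.mem_insert.1 hB with rfl | hB
      · rw [Finset.card_insert_of_notMem hat]
        have := Finset.card_pos.2 (Finset.nonempty_iff_ne_empty.2 ht0)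
        omega
      · exact h2 B hB
    · intro x hx
      by_cases hxt : x ∈ insert a t
      · refine ⟨insert a t, ⟨Finset.mem_insert_self _ _, hxt⟩, ?_⟩
        rintro E ⟨hE, hxE⟩
        rcases Finset.mem_insert.1 hE with rfl | hE
        · rfl
        · exfalso
          obtain ⟨p, q⟩ := Finset.mem_sdiff.1 (h1 E hE hxE)
          rcases Finset.mem_insert.1 hxt with rfl | h
          · exact ha p
          · exact q h
      · have hxa : x ≠ a := fun h => hxt (h ▸ Finset.mem_insert_self _ _)
        have hxs := (Finset.mem_insert.1 hx).resolve_left hxa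
        obtain ⟨D, ⟨hD, hxD⟩, huD⟩ := h3 x (Finset.mem_sdiff.2 ⟨hxs, fun h => hxt (Finset.mem_insert_of_mem h)⟩)
        refine ⟨D, ⟨Finset.mem_insert_of_mem hD, hxD⟩, ?_⟩
        rintro E ⟨hE, hxE⟩
        rcases Finset.mem_insert.1 hE with rfl | hE
        · exact absurd hxE hxt
        · exact huD E ⟨hE, hxE⟩

lemma FP_notMem (s t : Finset α) (a : α) (ha : a ∉ s) (Q : Finset (Finset α)) (hQ : Q ∈ FP (s \ t))
    (B : Finset α) (hB : B ∈ Q) : a ∉ B := by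
  intro h
  exact ha (Finset.mem_sdiff.1 (((mem_FP _ _).1 hQ).1 B hB h)).1

lemma FP_card_insert (s : Finset α) (a : α) (ha : a ∉ s) :
    (FP (insert a s)).card = ∑ t ∈ s.powerset.erase ∅, (FP (s \ t)).card := by
  rw [FP_insert s a ha, Finset.card_biUnion]
  · apply Finset.sum_congr rfl
    intro t ht
    apply Finset.card_image_of_injOn
    intro P hP Q hQ h
    have hP' : insert a t ∉ P := fun h' => FP_notMem s t a ha P hP _ h' (Finset.mem_insert_self _ _)
    have hQ' : insert a t ∉ Q := fun h' => FP_notMem s t a ha Q hQ _ h' (Finset.mem_insert_self _ _)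
    have : (insert (insert a t) P).erase (insert a t) = (insert (insert a t) Q).erase (insert a t) :=
      congrArg (fun X => Finset.erase X (insert a t)) h
    rwa [Finset.erase_insert hP', Finset.erase_insert hQ'] at this
  · intro t ht u hu htu
    rw [Function.onFun, Finset.disjoint_left]
    intro P hP hP2
    obtain ⟨Q, hQ, rfl⟩ := Finset.mem_image.1 hP
    obtain ⟨Q2, hQ2, he⟩ := Finset.mem_image.1 hP2
    have hmem : insert a t ∈ insert (insert a u) Q2 := by
      rw [he]; exact Finset.mem_insert_self _ _
    have hts : t ⊆ s := Finset.mem_powerset.1 (Finset.mem_of_mem_erase ht)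
    have hus : u ⊆ s := Finset.mem_powerset.1 (Finset.mem_of_mem_erase hu)
    rcases Finset.mem_insert.1 hmem with h | h
    · apply htu
      have : (insert a t).erase a = (insert a u).erase a := by rw [h]
      rwa [Finset.erase_insert (fun h => ha (hts h)), Finset.erase_insert (fun h => ha (hus h))] at this
    · exact FP_notMem s u a ha Q2 hQ2 _ h (Finset.mem_insert_self _ _)

lemma FP_card (n : ℕ) : ∀ s : Finset α, s.card = n → Real.exp 1 * ((FP s).card : ℝ) = Tm n := by
  induction n using Nat.strong_induction_on with
  | _ n ih =>
    intro s hs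
    rcases Finset.eq_empty_or_nonempty s with rfl | ⟨a, has⟩
    · rw [FP_empty]
      simp at hs
      rw [← hs, T_zero]; simp
    · obtain ⟨u, hau, rfl⟩ : ∃ u, a ∉ u ∧ insert a u = s := ⟨s.erase a, by simp, Finset.insert_erase has⟩
      rw [Finset.card_insert_of_notMem hau] at hs
      obtain ⟨m, rfl⟩ : ∃ m, n = m + 1 := ⟨u.card, hs.symm⟩
      have hu : u.card = m := by omega
      rw [FP_card_insert u a hau]
      push_cast
      rw [Finset.mul_sum]
      have e1 : ∀ t ∈ u.powerset.erase ∅, Real.exp 1 * ((FP (u \ t)).card : ℝ) = Tm (m - t.card) := by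
        intro t ht
        have htu := Finset.mem_powerset.1 (Finset.mem_of_mem_erase ht)
        exact ih (m - t.card) (by omega) _ (by rw [Finset.card_sdiff_of_subset htu, hu])
      rw [Finset.sum_congr rfl e1]
      have e2 : ∑ t ∈ u.powerset.erase ∅, Tm (m - t.card) + Tm m = ∑ t ∈ u.powerset, Tm (m - t.card) := by
        have := Finset.sum_erase_add u.powerset (fun t => Tm (m - t.card)) (Finset.empty_mem_powerset u)
        simpa using this
      have e3 : ∑ t ∈ u.powerset, Tm (m - t.card) = ∑ i ∈ Finset.range (m+1), (m.choose i : ℝ) * Tm i := by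
        rw [Finset.sum_powerset_apply_card (fun k => Tm (m - k)), hu]
        rw [← Finset.sum_range_reflect]
        apply Finset.sum_congr rfl
        intro i hi
        have hi' : i ≤ m := by simpa [Nat.lt_succ_iff] using hi
        have h1 : m + 1 - 1 - i = m - i := by omega
        have h2 : m - (m - i) = i := by omega
        rw [h1, h2, Nat.choose_symm hi', nsmul_eq_mul]
      have := T_rec m
      linarith
end comb

lemma beta_eq (n : ℕ) : Real.exp 1 * (beta n : ℝ) = Tm n := by
  rw [← FP_card n (Finset.univ : Finset (Fin n)) (by simp)]
  congr 2
  unfold beta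
  rw [← Nat.card_eq_finsetCard]
  apply Nat.card_congr
  refine Equiv.subtypeEquivRight fun P => ?_
  rw [mem_FP]
  unfold IsSetPartition
  constructor
  · rintro ⟨⟨h1, h2⟩, h3⟩
    exact ⟨fun B _ => Finset.subset_univ B, h3, fun x _ => h2 x⟩
  · rintro ⟨h1, h2, h3⟩
    exact ⟨⟨fun B hB => Finset.card_pos.1 (by have := h2 B hB; omega), fun x => h3 x (Finset.mem_univ x)⟩, h2⟩

lemma beta_step (n i : ℕ) (hn : 4 ≤ n) (w : ℝ) (hw : 1 ≤ w) (h : w * Real.exp w = n + i) (hin : i ≤ n) :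
    0 < (beta n : ℝ) ∧ |(beta (n+1) : ℝ) - Real.exp w * beta n| ≤ (2 * i + 30) * beta n := by
  have hw0 : 0 < w := by linarith
  have hl := S_lower n i (by omega) w h
  have hu := S_upper n i (by omega) w hw0 h
  have hb := S_big n
  have b0 := beta_eq n
  have b1 := beta_eq (n+1)
  rw [T_eq] at b0 b1
  set M := Real.exp w with hM
  have hM0 : 0 < M := Real.exp_pos w
  have he : 0 < Real.exp 1 := Real.exp_pos 1
  have h16 : (16:ℝ) ≤ 2^n := by
    have := pow_le_pow_right₀ (by norm_num : (1:ℝ) ≤ 2) hn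
    norm_num at this ⊢; exact this
  have hni : (i:ℝ) ≤ n := by exact_mod_cast hin
  have hn2 : (n:ℝ) + 1 ≤ 2^n := by exact_mod_cast Nat.lt_two_pow_self
  have hMn : M ≤ n + i := by nlinarith
  have hM2 : M + 1 ≤ 12 * Sm n := by linarith
  have hS2 : 2 ≤ Sm n := by linarith
  have s0 : |(-1:ℝ)^n| = 1 := by simp
  have s1 : |(-1:ℝ)^(n+1)| = 1 := by simp
  have s0' := abs_le.1 s0.le
  have s1' := abs_le.1 s1.le
  set c0 := (-1:ℝ)^n
  set c1 := (-1:ℝ)^(n+1)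
  have hX : Sm n ≤ 2 * (Real.exp 1 * beta n) := by rw [b0]; linarith
  have hp : 0 < Real.exp 1 * (beta n : ℝ) := by linarith
  refine ⟨(pos_iff_pos_of_mul_pos hp).1 he, ?_⟩
  have hi0 : (0:ℝ) ≤ i := Nat.cast_nonneg i
  have d1 : |Sm (n+1) + c1 - M * (Sm n + c0)| ≤ (i + 13) * Sm n + 2 := by
    have m1 : M * c0 ≤ M := by nlinarith
    have m2 : -M ≤ M * c0 := by nlinarith
    have m3 : 0 ≤ i * Sm n := by positivity
    rw [abs_le]; constructor <;> nlinarith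
  have d2 : Real.exp 1 * |(beta (n+1) : ℝ) - M * beta n| ≤ Real.exp 1 * ((2 * i + 30) * beta n) := by
    have : Real.exp 1 * |(beta (n+1) : ℝ) - M * beta n| = |Sm (n+1) + c1 - M * (Sm n + c0)| := by
      rw [← b0, ← b1]
      conv_lhs => rw [← abs_of_pos he, ← abs_mul]
      congr 1; ring
    rw [this]
    have f : (i + 14) * Sm n ≤ (i+14) * (2 * (Real.exp 1 * beta n)) := by gcongr
    nlinarith
  exact le_of_mul_le_mul_left d2 he

lemma beta_ind (L l : ℕ) (hl : l ≤ L) : ∃ K : ℝ, 0 ≤ K ∧ ∀ n : ℕ, 2 * L + 4 ≤ n → ∀ w : ℝ, 1 ≤ w →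
    w * Real.exp w = n → 2 * (2 * (L:ℝ) + 30) ≤ Real.exp w →
    |((beta (n - l) : ℝ) / (beta n : ℝ)) * (Real.exp w) ^ l - 1| ≤ K / Real.exp w := by
  induction l with
  | zero =>
    refine ⟨0, le_rfl, ?_⟩
    intro n hn w hw h hM
    have := (beta_step n 0 (by omega) w hw (by simpa using h) (by omega)).1
    simp [div_self this.ne']
  | succ l ih =>
    obtain ⟨K, hK, H⟩ := ih (by omega)
    set C : ℝ := 2 * (L:ℝ) + 30 with hC
    have hC0 : 0 < C := by positivity
    refine ⟨2 * K + 2 * C, by positivity, ?_⟩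
    intro n hn w hw h hM
    have H1 := H n hn w hw h hM
    obtain ⟨m, hm⟩ : ∃ m, n = m + (l+1) := ⟨n - (l+1), by omega⟩
    have e1 : n - (l+1) = m := by omega
    have e2 : n - l = m + 1 := by omega
    obtain ⟨p, q⟩ := beta_step m (l+1) (by omega) w hw (by rw [h, hm]; push_cast; ring) (by omega)
    rw [e2] at H1
    rw [e1]
    set M := Real.exp w with hMdef
    have hM0 : 0 < M := Real.exp_pos w
    have hlL : ((l+1 : ℕ):ℝ) ≤ L := by exact_mod_cast hl
    have q' : |(beta (m+1) : ℝ) - M * beta m| ≤ C * beta m := by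
      refine q.trans ?_
      gcongr
      linarith
    obtain ⟨q1, q2⟩ := abs_le.1 q'
    have g : M * beta m ≤ 2 * (beta (m+1) : ℝ) := by nlinarith
    have g0 : 0 < (beta (m+1) : ℝ) := by nlinarith
    have hd : |M * beta m / (beta (m+1) : ℝ) - 1| ≤ 2 * C / M := by
      have : M * beta m / (beta (m+1) : ℝ) - 1 = - (((beta (m+1) : ℝ) - M * beta m) / beta (m+1)) := by
        field_simp; ring
      rw [this, abs_neg, abs_div, abs_of_pos g0, div_le_div_iff₀ g0 hM0]
      calc _ ≤ C * beta m * M := by gcongr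
        _ ≤ _ := by nlinarith
    have hd1 : 2 * C / M ≤ 1 := by rw [div_le_one hM0]; exact hM
    set d := M * beta m / (beta (m+1) : ℝ) - 1 with hdd
    set r := ((beta (m+1) : ℝ) / (beta n : ℝ)) * M ^ l with hr
    have e : ((beta m : ℝ) / (beta n : ℝ)) * M ^ (l+1) - 1 = (r - 1) * (1 + d) + d := by
      have : ((beta m : ℝ) / (beta n : ℝ)) * M ^ (l+1) = r * (1 + d) := by
        rw [hr, hdd, pow_succ]; field_simp; ring
      rw [this]; ring
    rw [e]
    have h1d : |1 + d| ≤ 2 := by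
      obtain ⟨x, y⟩ := abs_le.1 (hd.trans hd1)
      rw [abs_le]; constructor <;> linarith
    calc _ ≤ |(r-1) * (1+d)| + |d| := abs_add_le _ _
      _ ≤ K / M * 2 + 2 * C / M := by rw [abs_mul]; gcongr
      _ = _ := by ring

/-- For every fixed `ℓ ≥ 0`: with `w = W(n)` the positive solution of
`w * e^w = n`, `beta (n - ℓ) / beta n = (w/n)^ℓ * (1 + O((log n)/n))`. -/
theorem beta_ratio_asymptotic (ℓ : ℕ) :
    ∃ C : ℝ, 0 < C ∧ ∃ N : ℕ, ∀ n : ℕ, N ≤ n → ∀ w : ℝ, 0 < w → w * Real.exp w = n →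
      |((beta (n - ℓ) : ℝ) / (beta n : ℝ)) * ((n : ℝ) / w) ^ ℓ - 1| ≤
        C * Real.log n / n := by
  obtain ⟨K, hK, H⟩ := beta_ind ℓ ℓ le_rfl
  refine ⟨K + 1, by linarith, (2 * (2 * ℓ + 30))^2, ?_⟩
  intro n hn w hw h
  have hnR : (2 * (2 * (ℓ:ℝ) + 30))^2 ≤ n := by exact_mod_cast hn
  have hM0 : 0 < Real.exp w := Real.exp_pos w
  have hl0 : (0:ℝ) ≤ ℓ := Nat.cast_nonneg ℓ
  have hw1 : 1 ≤ w := by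
    by_contra hc
    push Not at hc
    have h3 : Real.exp w < 3 := lt_trans (Real.exp_lt_exp.2 hc) (by linarith [Real.exp_one_lt_d9])
    nlinarith
  have hwM : w ≤ Real.exp w := by linarith [Real.add_one_le_exp w]
  have hM : 2 * (2 * (ℓ:ℝ) + 30) ≤ Real.exp w := by
    by_contra hc
    push Not at hc
    nlinarith
  have hnpos : (0:ℝ) < n := by rw [← h]; positivity
  have hdiv : (n:ℝ) / w = Real.exp w := by rw [← h]; field_simp
  rw [hdiv]
  refine (H n (by nlinarith) w hw1 h hM).trans ?_
  have hlog : w ≤ Real.log n := by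
    rw [Real.le_log_iff_exp_le hnpos, ← h]; nlinarith
  have : K / Real.exp w = K * w / n := by rw [← h]; field_simp
  rw [this]
  gcongr
  linarith
end
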